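/- arXiv:2004.07421 — 2 statements merged into one kernel-verified Lean document; each statement's English description precedes it below -/
import Mathlib

section
/- Let Ω ⊂ ℂⁿ be a bounded ℂ-convex domain. Then for every p ∈ Ω and every v ∈ ℂⁿ\{0}, the Kobayashi metric satisfies k_Ω(p;v) ≥ |v|/(4 δ_Ω(p;v)). -/
open Metric Set MeasureTheory Filter Topology

noncomputable section

variable {E : Type*} [NormedAddCommGroup E] [NormedSpace ℂ E]

/-- Distance from `x` to the boundary of `D`. -/
def bdist (D : Set E) (x : E) : ℝ := Metric.infDist x (frontier D)

/-- Distance from `x` to the boundary of `D` along the complex line `x + ℂ v`. -/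
def bdistDir (D : Set E) (x v : E) : ℝ :=
  Metric.infDist x (frontier D ∩ {w | ∃ c : ℂ, w = x + c • v})

/-- The infinitesimal Kobayashi (pseudo-)metric of `D ⊆ E`. -/
def kobMetric (D : Set E) (x v : E) : ℝ :=
  sInf { r : ℝ | ∃ (f : ℂ → E) (ξ : ℂ),
    DifferentiableOn ℂ f (ball (0:ℂ) 1) ∧ MapsTo f (ball (0:ℂ) 1) D ∧
    f 0 = x ∧ ξ • derivWithin f (ball (0:ℂ) 1) 0 = v ∧ r = ‖ξ‖ }

/-- `σ` is absolutely continuous on `[a,b]`, with a.e. derivative `g`. -/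
def IsACWithDeriv (σ g : ℝ → E) (a b : ℝ) : Prop :=
  IntervalIntegrable g volume a b ∧
  ∀ t ∈ Icc a b, σ t = σ a + ∫ s in a..t, g s

/-- The Kobayashi pseudo-distance of `D`, defined via lengths of absolutely
continuous curves (Venturini's description). -/
def kobDist (D : Set E) (x y : E) : ℝ :=
  sInf { r : ℝ | ∃ (a b : ℝ) (σ g : ℝ → E), a ≤ b ∧
    IsACWithDeriv σ g a b ∧ MapsTo σ (Icc a b) D ∧ σ a = x ∧ σ b = y ∧
    r = ∫ t in a..b, kobMetric D (σ t) (g t) }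

/-- Log-type convex domain, with explicit constants `C, ν > 0`. -/
def LogTypeConvexWith (D : Set E) (C ν : ℝ) : Prop :=
  IsOpen D ∧ D.Nonempty ∧ Bornology.IsBounded D ∧ Convex ℝ D ∧ 0 < C ∧ 0 < ν ∧
  ∀ z ∈ D, ∀ v : E, v ≠ 0 →
    bdistDir D z v ≤ C / |Real.log (bdist D z)| ^ (1 + ν)

/-- Log-type convex domain. -/
def LogTypeConvex (D : Set E) : Prop := ∃ C ν : ℝ, LogTypeConvexWith D C ν

/-- A `ℂ`-convex set: every nonempty intersection with a complex affine line is
connected and simply connected. -/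
def CConvex (D : Set E) : Prop :=
  ∀ z v : E, v ≠ 0 → (D ∩ {w | ∃ c : ℂ, w = z + c • v}).Nonempty →
    IsConnected (D ∩ {w | ∃ c : ℂ, w = z + c • v}) ∧
    SimplyConnectedSpace ↥(D ∩ {w | ∃ c : ℂ, w = z + c • v})

/-- Log-type `ℂ`-convex domain. -/
def LogTypeCConvex (D : Set E) : Prop :=
  IsOpen D ∧ D.Nonempty ∧ Bornology.IsBounded D ∧ CConvex D ∧
  ∃ C ν : ℝ, 0 < C ∧ 0 < ν ∧
    ∀ z ∈ D, ∀ v : E, v ≠ 0 →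
      bdistDir D z v ≤ C / |Real.log (bdist D z)| ^ (1 + ν)

/-- `σ : [a,b] → D` (with a.e. derivative `g`) is a `(λ,κ)`-almost geodesic for the
Kobayashi distance of `D`. -/
def AlmostGeodesicOn (D : Set E) (lam kap : ℝ) (σ g : ℝ → E) (a b : ℝ) : Prop :=
  MapsTo σ (Icc a b) D ∧ IsACWithDeriv σ g a b ∧
  (∀ s ∈ Icc a b, ∀ t ∈ Icc a b,
    (1 / lam) * |t - s| - kap ≤ kobDist D (σ s) (σ t) ∧
    kobDist D (σ s) (σ t) ≤ lam * |t - s| + kap) ∧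
  (∀ᵐ t ∂volume, t ∈ Icc a b → kobMetric D (σ t) (g t) ≤ lam)

/-- `σ : [a,b] → D` is a `C`-rough geodesic for the Kobayashi distance of `D`. -/
def RoughGeodesicOn (D : Set E) (C : ℝ) (σ : ℝ → E) (a b : ℝ) : Prop :=
  MapsTo σ (Icc a b) D ∧
  ∀ s ∈ Icc a b, ∀ t ∈ Icc a b,
    |t - s| - C ≤ kobDist D (σ s) (σ t) ∧ kobDist D (σ s) (σ t) ≤ |t - s| + C

/-- `ρ` is a `C¹` local defining function for `D` near `ξ` on the open set `W`. -/
def IsLocalDefiningFn (D : Set E) (ξ : E) (W : Set E) (ρ : E → ℝ) : Prop :=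
  IsOpen W ∧ ξ ∈ W ∧ ContDiffOn ℝ 1 ρ W ∧ (∀ x ∈ W, fderiv ℝ ρ x ≠ 0) ∧
  D ∩ W = {x ∈ W | ρ x < 0} ∧ frontier D ∩ W = {x ∈ W | ρ x = 0}

/-- `ξ` is a Dini-smooth boundary point of `D`: the boundary is `C¹` near `ξ` and the
unit normal admits a modulus of continuity `ω` satisfying the Dini condition. -/
def DiniSmoothBoundaryPoint (D : Set E) (ξ : E) : Prop :=
  ∃ (W : Set E) (ρ : E → ℝ) (ω : ℝ → ℝ),
    IsLocalDefiningFn D ξ W ρ ∧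
    (∀ t ∈ Icc (0:ℝ) 1, 0 ≤ ω t) ∧ MonotoneOn ω (Icc (0:ℝ) 1) ∧
    IntegrableOn (fun t => ω t / t) (Ioc (0:ℝ) 1) ∧
    ∀ x ∈ frontier D ∩ W, ∀ y ∈ frontier D ∩ W, ‖x - y‖ ≤ 1 →
      ‖(‖fderiv ℝ ρ x‖)⁻¹ • fderiv ℝ ρ x - (‖fderiv ℝ ρ y‖)⁻¹ • fderiv ℝ ρ y‖ ≤ ω ‖x - y‖

/-- `D` has `C^{1,ε}` boundary: near every boundary point there is a `C¹` defining
function whose differential is `ε`-Hölder. -/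
def HolderC1Boundary (D : Set E) (ε : ℝ) : Prop :=
  ∀ ξ ∈ frontier D, ∃ (W : Set E) (ρ : E → ℝ) (M : ℝ), 0 < M ∧
    IsLocalDefiningFn D ξ W ρ ∧
    ∀ x ∈ W, ∀ y ∈ W, ‖fderiv ℝ ρ x - fderiv ℝ ρ y‖ ≤ M * ‖x - y‖ ^ ε

/-- The complex affine tangent hyperplane of `∂D` at `x`, computed from a local
defining function `ρ`. -/
def complexTangentHyperplane (ρ : E → ℝ) (x : E) : Set E :=
  {w : E | fderiv ℝ ρ x (w - x) = 0 ∧ fderiv ℝ ρ x ((Complex.I : ℂ) • (w - x)) = 0}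

/-- The Gromov product of `x` and `y` with respect to the base point `o`, for the
Kobayashi distance of `D`. -/
def gromovProd (D : Set E) (o x y : E) : ℝ :=
  (kobDist D x o + kobDist D o y - kobDist D x y) / 2

end



noncomputable def kzCoef (s : ℝ) (m : ℕ) (u : ℂ → ℂ) : ℂ :=
  (s:ℂ) ^ m * ((2 * Real.pi * Complex.I : ℂ)⁻¹ • ∮ z in C(0, s), (z ^ (m+1))⁻¹ * u z)

lemma kzCoef_bound {s : ℝ} (hs : 0 < s) (m : ℕ) {u : ℂ → ℂ} {C : ℝ}
    (hu : ∀ z ∈ sphere (0:ℂ) s, ‖u z‖ ≤ C) : ‖kzCoef s m u‖ ≤ C := by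
  have := circleIntegral.norm_two_pi_i_inv_smul_integral_le_of_norm_le_const
    (f := fun z => (z ^ (m+1))⁻¹ * u z) (c := 0) (R := s) (C := (s^(m+1))⁻¹ * C) hs.le (by
      intro z hz
      have hz' : ‖z‖ = s := by simpa using hz
      rw [norm_mul, norm_inv, norm_pow, hz']
      gcongr
      exact hu z hz)
  unfold kzCoef
  rw [norm_mul, norm_pow, Complex.norm_real, Real.norm_of_nonneg hs.le]
  calc _ ≤ s ^ m * (s * ((s^(m+1))⁻¹ * C)) := by gcongr
    _ = C := by rw [pow_succ]; field_simp

lemma kzCoef_pow_mul {s : ℝ} (hs : 0 < s) (hs1 : s < 1) {m k : ℕ} (hmk : m ≤ k) {u v : ℂ → ℂ}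
    (hv : DifferentiableOn ℂ v (ball 0 1)) (huv : ∀ z ∈ sphere (0:ℂ) s, u z = z ^ k * v z) :
    kzCoef s m u = (s:ℂ)^m * ((0:ℂ) ^ (k - m) * v 0) := by
  unfold kzCoef
  congr 1
  have hd : DifferentiableOn ℂ (fun z => z ^ (k-m) * v z) (closure (ball 0 s)) := by
    apply DifferentiableOn.mul (by fun_prop)
    apply hv.mono
    rw [closure_ball _ hs.ne']
    exact closedBall_subset_ball hs1
  have := hd.diffContOnCl.two_pi_i_inv_smul_circleIntegral_sub_inv_smul (w := 0) (by simpa using hs)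
  rw [← this]
  congr 1
  apply circleIntegral.integral_congr hs.le
  intro z hz
  have hz' : ‖z‖ = s := by simpa using hz
  have hz0 : z ≠ 0 := by rw [← norm_pos_iff, hz']; exact hs
  simp only [smul_eq_mul, sub_zero]
  rw [huv z hz]
  obtain ⟨j, rfl⟩ := Nat.exists_eq_add_of_le hmk
  simp only [Nat.add_sub_cancel_left]
  field_simp
  ring

lemma kzCoef_sum {s : ℝ} (hs : 0 < s) (m : ℕ) {ι : Type*} (t : Finset ι) (c : ι → ℂ)
    (u : ι → ℂ → ℂ) (hu : ∀ i ∈ t, ContinuousOn (u i) (sphere 0 s)) :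
    kzCoef s m (fun z => ∑ i ∈ t, c i * u i z) = ∑ i ∈ t, c i * kzCoef s m (u i) := by
  have h1 : (∮ z in C(0, s), (z ^ (m+1))⁻¹ * ∑ i ∈ t, c i * u i z)
      = ∑ i ∈ t, c i * ∮ z in C(0, s), (z ^ (m+1))⁻¹ * u i z := by
    simp_rw [Finset.mul_sum, ← circleIntegral.integral_const_mul]
    rw [← circleIntegral.integral_fun_sum]
    · congr 1; ext z; congr 1; ext i; ring
    · intro i hi
      apply ContinuousOn.circleIntegrable hs.le
      apply ContinuousOn.mul continuousOn_const
      apply ContinuousOn.mul _ (hu i hi)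
      apply ContinuousOn.inv₀ (by fun_prop)
      intro z hz
      have hz' : ‖z‖ = s := by simpa using hz
      apply pow_ne_zero
      rw [← norm_pos_iff, hz']; exact hs
  unfold kzCoef
  rw [h1]
  simp only [smul_eq_mul, Finset.mul_sum]
  congr 1; ext i; ring

lemma kzCoef_add {s : ℝ} (hs : 0 < s) (m : ℕ) 
    (u v : ℂ → ℂ) (hu : ContinuousOn u (sphere 0 s)) (hv : ContinuousOn v (sphere 0 s)) :
    kzCoef s m (fun z => u z + v z) = kzCoef s m u + kzCoef s m v := by
  have := kzCoef_sum hs m Finset.univ (fun _ : Bool => 1) (fun b => if b then u else v) (by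
    intro i _; cases i <;> simpa)
  simpa using this

lemma kz_growth {x K : ℝ} (_hx : 0 ≤ x) (h : ∀ N : ℕ, x ^ (N * (N+1)) ≤ ((N+1).factorial : ℝ) * K ^ (N+1)) :
    x ≤ 1 := by
  by_contra! hx1
  have h0 : 0 ≤ |K| := abs_nonneg K
  have h2 : ∀ N : ℕ, x ^ N ≤ (N+1) * |K| := by
    intro N
    have h3 : (x ^ N) ^ (N+1) ≤ ((N+1) * |K|) ^ (N+1) := by
      rw [← pow_mul, mul_pow]
      refine (h N).trans ?_
      have : ((N+1).factorial : ℝ) ≤ ((N:ℝ)+1) ^ (N+1) := by exact_mod_cast Nat.factorial_le_pow (N+1)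
      calc _ ≤ ((N+1).factorial : ℝ) * |K| ^ (N+1) := by
            apply mul_le_mul_of_nonneg_left _ (by positivity)
            rw [← abs_pow]; exact le_abs_self _
        _ ≤ _ := by gcongr
    exact le_of_pow_le_pow_left₀ (by simp) (by positivity) h3
  have hlim := tendsto_pow_const_div_const_pow_of_one_lt 1 hx1
  have hlim0 := tendsto_pow_const_div_const_pow_of_one_lt 0 hx1
  have hl : Tendsto (fun n : ℕ => |K| * ((n:ℝ) ^ 1 / x ^ n + (n:ℝ)^0 / x ^ n)) atTop (𝓝 (|K| * (0+0))) :=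
    (hlim.add hlim0).const_mul _
  simp only [add_zero, mul_zero] at hl
  obtain ⟨n, hn⟩ := (hl.eventually (gt_mem_nhds one_pos)).exists
  have hxn : 0 < x ^ n := by positivity
  have := h2 n
  have e : |K| * ((n:ℝ) ^ 1 / x ^ n + (n:ℝ)^0 / x ^ n) = ((n+1) * |K|) / x^n := by
    field_simp
  rw [e, div_lt_one hxn] at hn
  linarith

theorem kz_BE {F : ℂ → ℂ} (hF : DifferentiableOn ℂ F (ball 0 1)) (h0 : F 0 = 0)
    (h : ∀ z ∈ ball (0:ℂ) 1, ∀ w ∈ ball (0:ℂ) 1, F z * F w ≠ 1) : ‖deriv F 0‖ ≤ 1 := by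
  suffices H : ∀ s : ℝ, 0 < s → s < 1 → s * ‖deriv F 0‖ ≤ 1 by
    by_contra! hc
    have := H (‖deriv F 0‖⁻¹ ^ (1/2:ℝ)) (by positivity) (by
      apply Real.rpow_lt_one (by positivity) (inv_lt_one_of_one_lt₀ hc) (by norm_num))
    have h3 : 0 < ‖deriv F 0‖ := by linarith
    have h4 : ‖deriv F 0‖⁻¹ < ‖deriv F 0‖⁻¹ ^ (1/2:ℝ) := by
      conv_lhs => rw [← Real.rpow_one (‖deriv F 0‖⁻¹)]
      exact Real.rpow_lt_rpow_of_exponent_gt (by positivity) (inv_lt_one_of_one_lt₀ hc) (by norm_num)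
    have : ‖deriv F 0‖⁻¹ * ‖deriv F 0‖ < ‖deriv F 0‖⁻¹ ^ (1/2:ℝ) * ‖deriv F 0‖ := by gcongr
    rw [inv_mul_cancel₀ h3.ne'] at this
    linarith
  intro s hs hs1
  set G := dslope F 0 with hG
  have hGd : DifferentiableOn ℂ G (ball 0 1) :=
    (Complex.differentiableOn_dslope (ball_mem_nhds _ one_pos)).2 hF
  have hFG : ∀ z, F z = z * G z := by
    intro z
    have := sub_smul_dslope F 0 z
    simp [h0] at this
    exact this.symm
  have hG0 : G 0 = deriv F 0 := dslope_same _ _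
  have hsub : closedBall (0:ℂ) s ⊆ ball 0 1 := closedBall_subset_ball hs1
  have hsub' : sphere (0:ℂ) s ⊆ ball 0 1 := sphere_subset_closedBall.trans hsub
  have hFc : ContinuousOn F (closedBall 0 s) := hF.continuousOn.mono hsub
  obtain ⟨C, hC⟩ : ∃ C, ∀ q ∈ (closedBall (0:ℂ) s) ×ˢ (closedBall (0:ℂ) s),
      ‖(1 - F q.1 * F q.2)⁻¹‖ ≤ C := by
    apply IsCompact.exists_bound_of_continuousOn
    · exact (isCompact_closedBall _ _).prod (isCompact_closedBall _ _)
    · apply ContinuousOn.inv₀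
      · apply continuousOn_const.sub
        apply ContinuousOn.mul
        · exact hFc.comp continuousOn_fst (fun q hq => hq.1)
        · exact hFc.comp continuousOn_snd (fun q hq => hq.2)
      · intro q hq h'
        exact h _ (hsub hq.1) _ (hsub hq.2) (sub_eq_zero.1 h').symm
  apply kz_growth (K := C) (by positivity)
  intro N
  let A : Matrix (Fin (N+1)) (Fin (N+1)) ℂ := fun k m => kzCoef s m (fun z => F z ^ (k:ℕ))
  have hAt : A.BlockTriangular id := by
    intro k m hkm
    have hkm' : (m:ℕ) < (k:ℕ) := hkm
    have := kzCoef_pow_mul hs hs1 hkm'.le (u := fun z => F z ^ (k:ℕ)) (v := fun z => G z ^ (k:ℕ))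
      (hGd.pow _) (by intro z _; simp only [hFG z]; ring)
    simp only [A, this]
    rw [zero_pow (by omega)]; simp
  have hAd : ∀ k, A k k = ((s:ℂ) * deriv F 0) ^ (k:ℕ) := by
    intro k
    have := kzCoef_pow_mul hs hs1 (le_refl (k:ℕ)) (u := fun z => F z ^ (k:ℕ)) (v := fun z => G z ^ (k:ℕ))
      (hGd.pow _) (by intro z _; simp only [hFG z]; ring)
    simp only [A, this, hG0]
    simp [mul_pow]
  have hdet : A.det = ((s:ℂ) * deriv F 0) ^ (∑ k : Fin (N+1), (k:ℕ)) := by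
    rw [Matrix.det_of_isUpperTriangular hAt, ← Finset.prod_pow_eq_pow_sum]
    exact Finset.prod_congr rfl fun k _ => hAd k
  have hsum : (∑ k : Fin (N+1), (k:ℕ)) * 2 = N * (N+1) := by
    rw [Fin.sum_univ_eq_sum_range (fun i => i) (N+1), Finset.sum_range_id_mul_two]
    simp [mul_comm]
  have hFpow : ∀ k : ℕ, ContinuousOn (fun z => F z ^ k) (sphere 0 s) := fun k =>
    (hF.continuousOn.mono hsub').pow k
  -- the intermediate functions
  have hPhi : ∀ m : Fin (N+1), ∀ w ∈ sphere (0:ℂ) s,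
      ‖∑ k : Fin (N+1), A k m * F w ^ (k:ℕ)‖ ≤ C := by
    intro m w hw
    have hwb := hsub' hw
    have hne : ∀ z ∈ ball (0:ℂ) 1, 1 - F z * F w ≠ 0 := fun z hz h' =>
      h z hz w hwb (sub_eq_zero.1 h').symm
    have hb : ‖kzCoef s m (fun z => (1 - F z * F w)⁻¹)‖ ≤ C := by
      apply kzCoef_bound hs
      intro z hz
      exact hC (z, w) ⟨sphere_subset_closedBall hz, sphere_subset_closedBall hw⟩
    have hv : DifferentiableOn ℂ (fun z => G z ^ (N+1) * F w ^ (N+1) * (1 - F z * F w)⁻¹) (ball 0 1) := by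
      apply DifferentiableOn.mul ((hGd.pow _).mul_const _)
      apply DifferentiableOn.inv _ hne
      exact (differentiableOn_const _).sub (hF.mul_const _)
    have hrem : kzCoef s m (fun z => (F z * F w) ^ (N+1) * (1 - F z * F w)⁻¹) = 0 := by
      have hm := m.2
      rw [kzCoef_pow_mul hs hs1 (k := N+1) hm.le hv
        (by intro z _; rw [hFG z]; ring), zero_pow (by omega)]
      simp
    have hsplit : kzCoef s m (fun z => (1 - F z * F w)⁻¹) =
        kzCoef s m (fun z => ∑ k : Fin (N+1), F w ^ (k:ℕ) * F z ^ (k:ℕ)) +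
        kzCoef s m (fun z => (F z * F w) ^ (N+1) * (1 - F z * F w)⁻¹) := by
      rw [← kzCoef_add hs]
      · unfold kzCoef
        congr 2
        apply circleIntegral.integral_congr hs.le
        intro z hz
        simp only
        congr 1
        have h1 := hne z (hsub' hz)
        have h2 : ∑ k : Fin (N+1), F w ^ (k:ℕ) * F z ^ (k:ℕ) = ∑ k ∈ Finset.range (N+1), (F z * F w)^k := by
          rw [Fin.sum_univ_eq_sum_range (fun k => F w ^ k * F z ^ k) (N+1)]
          apply Finset.sum_congr rfl; intro k _; rw [mul_pow, mul_comm]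
        have h3 := geom_sum_mul_neg (F z * F w) (N+1)
        rw [h2]
        field_simp
        linear_combination -h3
      · apply continuousOn_finsetSum
        intro k _
        exact continuousOn_const.mul (hFpow k)
      · apply ContinuousOn.mul
        · exact ((hF.continuousOn.mono hsub').mul continuousOn_const).pow _
        · apply ContinuousOn.inv₀
          · exact continuousOn_const.sub ((hF.continuousOn.mono hsub').mul continuousOn_const)
          · exact fun z hz => hne z (hsub' hz)
    rw [hsplit, hrem, add_zero, kzCoef_sum hs m Finset.univ (fun k : Fin (N+1) => F w ^ (k:ℕ))
      (fun k z => F z ^ (k:ℕ)) (fun k _ => hFpow k)] at hb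
    convert hb using 2
    apply Finset.sum_congr rfl; intro k _; exact mul_comm _ _
  have hB : ∀ m n, ‖(A.transpose * A) m n‖ ≤ C := by
    intro m n
    have e : (A.transpose * A) m n = kzCoef s n (fun w => ∑ k : Fin (N+1), A k m * F w ^ (k:ℕ)) := by
      rw [kzCoef_sum hs n Finset.univ (fun k : Fin (N+1) => A k m)
        (fun k z => F z ^ (k:ℕ)) (fun k _ => hFpow k)]
      rw [Matrix.mul_apply]
      rfl
    rw [e]
    exact kzCoef_bound hs _ (hPhi m)
  have hd2 := Matrix.det_le (A := A.transpose * A) (abv := IsAbsoluteValue.toAbsoluteValue (norm : ℂ → ℝ)) (x := C) hB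
  simp only [Matrix.det_mul, Matrix.det_transpose, hdet, Fintype.card_fin] at hd2
  have hd3 : ‖((s:ℂ) * deriv F 0) ^ (∑ k : Fin (N+1), (k:ℕ)) * ((s:ℂ) * deriv F 0) ^ (∑ k : Fin (N+1), (k:ℕ))‖
      ≤ ((N+1).factorial : ℝ) * C ^ (N+1) := by simpa [nsmul_eq_mul] using hd2
  rw [← pow_add, ← mul_two, hsum, norm_pow, norm_mul, Complex.norm_real, Real.norm_of_nonneg hs.le] at hd3
  exact hd3

lemma kz_gelfer {h : ℂ → ℂ} (hd : DifferentiableOn ℂ h (ball 0 1))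
    (hne : ∀ z ∈ ball (0:ℂ) 1, ∀ w ∈ ball (0:ℂ) 1, h z + h w ≠ 0) :
    ‖deriv h 0‖ ≤ 2 * ‖h 0‖ := by
  have m0 : (0:ℂ) ∈ ball (0:ℂ) 1 := by simp
  have ha : h 0 ≠ 0 := by
    intro h'; apply hne 0 m0 0 m0; simp [h']
  have hda : HasDerivAt h (deriv h 0) 0 :=
    (hd.differentiableAt (ball_mem_nhds _ one_pos)).hasDerivAt
  have hF := kz_BE (F := fun z => (h z - h 0) / (h z + h 0))
    (by
      apply DifferentiableOn.div (hd.sub_const _) (hd.add_const _)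
      exact fun z hz => hne z hz 0 m0)
    (by simp)
    (by
      intro z hz w hw h'
      have h1 := hne z hz 0 m0
      have h2 := hne w hw 0 m0
      rw [div_mul_div_comm, div_eq_one_iff_eq (mul_ne_zero h1 h2)] at h'
      have h3 : h 0 * (h z + h w) = 0 := by linear_combination (-1/2) * h'
      rcases mul_eq_zero.1 h3 with h4 | h4
      · exact ha h4
      · exact hne z hz w hw h4)
  have hder : HasDerivAt (fun z => (h z - h 0) / (h z + h 0)) (deriv h 0 / (2 * h 0)) 0 := by
    have := (hda.sub_const (h 0)).fun_div (hda.add_const (h 0)) (hne 0 m0 0 m0)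
    have he : (deriv h 0 * (h 0 + h 0) - (h 0 - h 0) * deriv h 0) / (h 0 + h 0) ^ 2
        = deriv h 0 / (2 * h 0) := by
      rw [← two_mul, sub_self, zero_mul, sub_zero]
      field_simp
    rw [he] at this
    exact this
  rw [hder.deriv, norm_div, norm_mul, div_le_one (by have := norm_pos_iff.2 ha; simpa using this)] at hF
  simpa using hF

lemma kz_koebe {g h : ℂ → ℂ} (hg : DifferentiableOn ℂ g (ball 0 1))
    (hc : ContinuousOn h (ball 0 1)) (hgh : ∀ z ∈ ball (0:ℂ) 1, h z ^ 2 = g z)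
    (hne : ∀ z ∈ ball (0:ℂ) 1, ∀ w ∈ ball (0:ℂ) 1, h z + h w ≠ 0) :
    ‖deriv g 0‖ ≤ 4 * ‖g 0‖ := by
  have m0 : (0:ℂ) ∈ ball (0:ℂ) 1 := by simp
  have hder : ∀ z ∈ ball (0:ℂ) 1, HasDerivAt h (deriv g z / (h z + h z)) z := by
    intro z hz
    have hU : ball (0:ℂ) 1 ∈ 𝓝 z := isOpen_ball.mem_nhds hz
    have hgz := (hg.differentiableAt hU).hasDerivAt
    rw [hasDerivAt_iff_tendsto_slope] at hgz ⊢
    have hcz : Tendsto (fun w => h w + h z) (𝓝[≠] z) (𝓝 (h z + h z)) :=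
      ((hc.continuousAt hU).add continuousAt_const).mono_left nhdsWithin_le_nhds
    refine (hgz.div hcz (hne z hz z hz)).congr' ?_
    filter_upwards [nhdsWithin_le_nhds hU] with w hw
    have := hne w hw z hz
    simp only [Pi.div_apply, slope_def_field]
    rw [← hgh w hw, ← hgh z hz]
    field_simp
    ring
  have hd : DifferentiableOn ℂ h (ball 0 1) := fun z hz =>
    (hder z hz).differentiableAt.differentiableWithinAt
  have h1 := kz_gelfer hd hne
  rw [(hder 0 m0).deriv, norm_div, ← two_mul, norm_mul] at h1
  have ha : 0 < ‖h 0‖ := by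
    rw [norm_pos_iff]
    intro h'; apply hne 0 m0 0 m0; simp [h']
  rw [div_le_iff₀ (by simpa using ha)] at h1
  rw [← hgh 0 m0, norm_pow]
  simp at h1
  linarith

lemma kz_exp_unique {A : Type*} [TopologicalSpace A] {s : Set A} (hs : IsPreconnected s)
    {u v : A → ℂ} (hu : ContinuousOn u s) (hv : ContinuousOn v s)
    (huv : ∀ x ∈ s, Complex.exp (u x) = Complex.exp (v x)) {a : A} (ha : a ∈ s) (hav : u a = v a) :
    ∀ x ∈ s, u x = v x :=
  Complex.isCoveringMap_exp.eqOn_of_comp_eqOn hs hu hv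
    (fun x hx => Subtype.ext (huv x hx)) ha hav

/-- All complex line slices through two points are simply connected. -/
def KzSC {Y : Type*} [AddCommGroup Y] [Module ℂ Y] (D : Set Y) : Prop :=
  ∀ y ∈ D, ∀ y' ∈ D, IsSimplyConnected {c : ℂ | y + c • (y' - y) ∈ D}

lemma kz_sc_univ : IsSimplyConnected (univ : Set ℂ) := by
  have : SimplyConnectedSpace (univ : Set ℂ) := by
    have := (Homeomorph.Set.univ ℂ).toHomotopyEquiv.simplyConnectedSpace
    exact this
  exact this

lemma CConvex.kzSC {E : Type*} [NormedAddCommGroup E] [NormedSpace ℂ E] {D : Set E} (hD : CConvex D) : KzSC D := by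
  intro y hy y' hy'
  by_cases h : y = y'
  · subst h
    have : {c : ℂ | y + c • (y - y) ∈ D} = univ := by ext c; simp [hy]
    rw [this]
    exact kz_sc_univ
  · have hv : y' - y ≠ 0 := sub_ne_zero.2 (Ne.symm h)
    have h1 := (hD y (y' - y) hv ⟨y, hy, 0, by simp⟩).2
    have hemb : Topology.IsEmbedding (fun c : ℂ => y + c • (y' - y)) := by
      have e1 : Topology.IsClosedEmbedding (LinearMap.toSpanSingleton ℂ E (y' - y)) :=
        LinearMap.isClosedEmbedding_of_injective (LinearMap.ker_toSpanSingleton ℂ hv)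
      exact (Homeomorph.addLeft y).isEmbedding.comp e1.isEmbedding
    rw [← hemb.isSimplyConnected_image]
    have : (fun c : ℂ => y + c • (y' - y)) '' {c : ℂ | y + c • (y' - y) ∈ D} =
        D ∩ {w | ∃ c : ℂ, w = y + c • (y' - y)} := by
      ext w
      constructor
      · rintro ⟨c, hc, rfl⟩
        exact ⟨hc, c, rfl⟩
      · rintro ⟨hw, c, rfl⟩
        exact ⟨c, hw, rfl⟩
    rw [this]
    exact h1

section
variable {Y : Type*} [NormedAddCommGroup Y] [NormedSpace ℂ Y]

def KzR (D : Set Y) (l : Y →L[ℂ] ℂ) (y y' : Y) (d : ℂ) : Prop :=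
  ∃ g L : C(unitInterval, ℂ), g 0 = 0 ∧ g 1 = 1 ∧ (∀ t, y + g t • (y' - y) ∈ D) ∧
    (∀ t, Complex.exp (L t) = l (y + g t • (y' - y))) ∧ d = L 1 - L 0

lemma kz_slice_log {D : Set Y} (hDo : IsOpen D) (hD : KzSC D) {l : Y →L[ℂ] ℂ}
    (hl : ∀ y ∈ D, l y ≠ 0) {y y' : Y} (hy : y ∈ D) (hy' : y' ∈ D) :
    ∃ f : ℂ → ℂ, ContinuousOn f {c : ℂ | y + c • (y' - y) ∈ D} ∧
      ∀ c ∈ {c : ℂ | y + c • (y' - y) ∈ D}, Complex.exp (f c) = l (y + c • (y' - y)) := by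
  obtain ⟨f, hf, hf'⟩ := Complex.exists_continuousOn_eqOn_exp_comp (hD y hy y' hy')
    (hDo.preimage (by fun_prop : Continuous fun c : ℂ => y + c • (y' - y)))
    (g := fun c => l (y + c • (y' - y))) (by fun_prop) (by
      rintro ⟨c, hc, h⟩
      exact hl _ hc h)
  exact ⟨f, hf, hf'⟩

lemma KzR.exists {D : Set Y} (hDo : IsOpen D) (hD : KzSC D) {l : Y →L[ℂ] ℂ}
    (hl : ∀ y ∈ D, l y ≠ 0) {y y' : Y} (hy : y ∈ D) (hy' : y' ∈ D) : ∃ d, KzR D l y y' d := by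
  obtain ⟨f, hf, hf'⟩ := kz_slice_log hDo hD hl hy hy'
  obtain ⟨γ, hγ⟩ := (hD y hy y' hy').isPathConnected.joinedIn 0 (by simpa using hy) 1 (by simpa using hy')
  refine ⟨_, γ, ⟨fun t => f (γ t), ?_⟩, γ.source, γ.target, hγ, fun t => hf' _ (hγ t), rfl⟩
  exact hf.comp_continuous γ.continuous hγ

lemma KzR.unique {D : Set Y} (hDo : IsOpen D) (hD : KzSC D) {l : Y →L[ℂ] ℂ}
    (hl : ∀ y ∈ D, l y ≠ 0) {y y' : Y} (hy : y ∈ D) (hy' : y' ∈ D) {d d' : ℂ}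
    (h : KzR D l y y' d) (h' : KzR D l y y' d') : d = d' := by
  obtain ⟨f, hf, hf'⟩ := kz_slice_log hDo hD hl hy hy'
  suffices H : ∀ d, KzR D l y y' d → d = f 1 - f 0 by rw [H d h, H d' h']
  rintro d ⟨g, L, g0, g1, hg, hL, rfl⟩
  have := kz_exp_unique (s := univ) isPreconnected_univ (u := fun t => L t)
    (v := fun t => f (g t) + (L 0 - f (g 0))) (by fun_prop)
    (by
      apply Continuous.continuousOn
      exact (hf.comp_continuous g.continuous hg).add continuous_const)
    (by
      intro t _
      rw [hL, Complex.exp_add, Complex.exp_sub, hL, hf' _ (hg t), hf' _ (hg 0), div_self, mul_one]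
      exact hl _ (hg 0)) (mem_univ 0) (by ring) 1 (mem_univ 1)
  simp only [g0, g1] at this
  rw [this]; ring

open Classical in
noncomputable def kzD (D : Set Y) (l : Y →L[ℂ] ℂ) (y y' : Y) : ℂ :=
  if h : ∃ d, KzR D l y y' d then h.choose else 0

lemma kzD_spec {D : Set Y} (hDo : IsOpen D) (hD : KzSC D) {l : Y →L[ℂ] ℂ}
    (hl : ∀ y ∈ D, l y ≠ 0) {y y' : Y} (hy : y ∈ D) (hy' : y' ∈ D) : KzR D l y y' (kzD D l y y') := by
  have h := KzR.exists hDo hD hl hy hy'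
  unfold kzD
  rw [dif_pos h]
  exact h.choose_spec

lemma KzR.eq {D : Set Y} (hDo : IsOpen D) (hD : KzSC D) {l : Y →L[ℂ] ℂ}
    (hl : ∀ y ∈ D, l y ≠ 0) {y y' : Y} (hy : y ∈ D) (hy' : y' ∈ D) {d : ℂ} (h : KzR D l y y' d) :
    kzD D l y y' = d :=
  KzR.unique hDo hD hl hy hy' (kzD_spec hDo hD hl hy hy') h

lemma kzD_self {D : Set Y} (hDo : IsOpen D) (hD : KzSC D) {l : Y →L[ℂ] ℂ}
    (hl : ∀ y ∈ D, l y ≠ 0) {y : Y} (hy : y ∈ D) : kzD D l y y = 0 := by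
  apply KzR.eq hDo hD hl hy hy
  refine ⟨⟨fun t => ((t:ℝ):ℂ), by fun_prop⟩, ContinuousMap.const _ (Complex.log (l y)),
    by simp, by simp, by simpa using hy, ?_, by simp⟩
  intro t
  simp [Complex.exp_log (hl y hy)]

lemma kzD_exp {D : Set Y} (hDo : IsOpen D) (hD : KzSC D) {l : Y →L[ℂ] ℂ}
    (hl : ∀ y ∈ D, l y ≠ 0) {y y' : Y} (hy : y ∈ D) (hy' : y' ∈ D) :
    Complex.exp (kzD D l y y') = l y' / l y := by
  obtain ⟨g, L, g0, g1, hg, hL, h⟩ := kzD_spec hDo hD hl hy hy'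
  rw [h, Complex.exp_sub, hL, hL, g0, g1]
  simp

section family
variable {X : Type*} [TopologicalSpace X] {W : Set (X × Y)} {l : Y →L[ℂ] ℂ}

lemma kz_fiber_open (hW : IsOpen W) (x : X) : IsOpen {y | (x, y) ∈ W} :=
  hW.preimage (by fun_prop)

lemma kzD_eventually (hW : IsOpen W) (hS : ∀ x, KzSC {y | (x, y) ∈ W})
    (hl : ∀ q ∈ W, l q.2 ≠ 0) {x₀ : X} {y y' : Y} (hy : (x₀, y) ∈ W) (hy' : (x₀, y') ∈ W) :
    ∀ᶠ q : X × Y in 𝓝 (x₀, y'), kzD {y | (q.1, y) ∈ W} l y q.2 =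
      kzD {y | (x₀, y) ∈ W} l y y' + Complex.log (l q.2 / l y') := by
  obtain ⟨g, L, g0, g1, hg, hL, h⟩ := kzD_spec (kz_fiber_open hW x₀) (hS x₀)
    (fun z hz => hl (x₀, z) hz) hy hy'
  have hne : ∀ t, l (y + g t • (y' - y)) ≠ 0 := fun t => hl (x₀, _) (hg t)
  have e1 : ∀ᶠ q : X × Y in 𝓝 (x₀, y'), ∀ t ∈ (univ : Set unitInterval),
      (q.1, y + g t • (q.2 - y)) ∈ W ∧
      l (y + g t • (q.2 - y)) / l (y + g t • (y' - y)) ∈ Complex.slitPlane := by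
    apply isCompact_univ.eventually_forall_of_forall_eventually
    intro t _
    apply Filter.Eventually.and
    · have hc : Continuous fun z : (X × Y) × unitInterval => (z.1.1, y + g z.2 • (z.1.2 - y)) := by
        fun_prop
      exact hc.continuousAt.eventually_mem (hW.mem_nhds (hg t))
    · have hc : Continuous fun z : (X × Y) × unitInterval =>
          l (y + g z.2 • (z.1.2 - y)) / l (y + g z.2 • (y' - y)) := by
        apply Continuous.div (by fun_prop) (by fun_prop)
        intro z; exact hne _
      apply hc.continuousAt.eventually_mem
      apply Complex.isOpen_slitPlane.mem_nhds
      simp only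
      rw [div_self (hne t)]
      exact Complex.one_mem_slitPlane
  have e2 : ∀ᶠ q : X × Y in 𝓝 (x₀, y'), (q.1, y) ∈ W := by
    have hc : Continuous fun q : X × Y => (q.1, y) := by fun_prop
    exact hc.continuousAt.eventually_mem (hW.mem_nhds hy)
  have e3 : ∀ᶠ q : X × Y in 𝓝 (x₀, y'), q ∈ W := hW.mem_nhds hy'
  filter_upwards [e1, e2, e3] with q h1 h2 h3
  apply KzR.eq (kz_fiber_open hW q.1) (hS q.1) (fun z hz => hl (q.1, z) hz) h2 h3
  refine ⟨g, ⟨fun t => L t + Complex.log (l (y + g t • (q.2 - y)) / l (y + g t • (y' - y))), ?_⟩,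
    g0, g1, fun t => (h1 t (mem_univ t)).1, ?_, ?_⟩
  · apply Continuous.add (by fun_prop)
    apply Continuous.clog
    · apply Continuous.div (by fun_prop) (by fun_prop)
      intro t; exact hne _
    · exact fun t => (h1 t (mem_univ t)).2
  · intro t
    have h4 : l (y + g t • (q.2 - y)) ≠ 0 := hl (q.1, _) (h1 t (mem_univ t)).1
    simp only [ContinuousMap.coe_mk]
    rw [Complex.exp_add, hL, Complex.exp_log (div_ne_zero h4 (hne t)), mul_div_cancel₀ _ (hne t)]
  · have h5 : l y ≠ 0 := hl _ hy
    rw [h]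
    simp only [ContinuousMap.coe_mk, g0, g1, one_smul, zero_smul, add_zero, div_self h5,
      Complex.log_one, add_sub_cancel]
    ring

lemma kzD_continuousAt (hW : IsOpen W) (hS : ∀ x, KzSC {y | (x, y) ∈ W})
    (hl : ∀ q ∈ W, l q.2 ≠ 0) {x₀ : X} {y y' : Y} (hy : (x₀, y) ∈ W) (hy' : (x₀, y') ∈ W) :
    ContinuousAt (fun q : X × Y => kzD {y | (q.1, y) ∈ W} l y q.2) (x₀, y') := by
  have h0 : l y' ≠ 0 := hl _ hy'
  refine ContinuousAt.congr ?_ (Filter.EventuallyEq.symm (kzD_eventually hW hS hl hy hy'))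
  apply ContinuousAt.add continuousAt_const
  apply ContinuousAt.clog
  · fun_prop
  · simp only
    rw [div_self h0]
    exact Complex.one_mem_slitPlane

lemma KzSC.isPreconnected {D : Set Y} (hD : KzSC D) : IsPreconnected D := by
  apply isPreconnected_of_forall_pair
  intro y hy y' hy'
  refine ⟨(fun c : ℂ => y + c • (y' - y)) '' {c : ℂ | y + c • (y' - y) ∈ D}, ?_, ?_, ?_, ?_⟩
  · rintro _ ⟨c, hc, rfl⟩; exact hc
  · exact ⟨0, by simpa using hy, by simp⟩
  · exact ⟨1, by simpa using hy', by simp⟩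
  · exact (hD y hy y' hy').isPathConnected.isConnected.isPreconnected.image _ (by fun_prop)

lemma kzD_continuousOn {D : Set Y} (hDo : IsOpen D) (hD : KzSC D) {l : Y →L[ℂ] ℂ}
    (hl : ∀ y ∈ D, l y ≠ 0) {y : Y} (hy : y ∈ D) : ContinuousOn (kzD D l y) D := by
  intro z hz
  have := kzD_continuousAt (X := Unit) (W := {q | q.2 ∈ D}) (l := l) (x₀ := ())
    (hDo.preimage continuous_snd) (fun _ => hD) (fun q hq => hl _ hq) hy hz
  have h2 : ContinuousAt (fun z : Y => ((), z)) z := by fun_prop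
  exact (ContinuousAt.comp (f := fun z : Y => ((), z)) this h2).continuousWithinAt

lemma kzD_cocycle {D : Set Y} (hDo : IsOpen D) (hD : KzSC D) {l : Y →L[ℂ] ℂ}
    (hl : ∀ y ∈ D, l y ≠ 0) {y y' y'' : Y} (hy : y ∈ D) (hy' : y' ∈ D) (hy'' : y'' ∈ D) :
    kzD D l y y'' = kzD D l y y' + kzD D l y' y'' := by
  refine kz_exp_unique hD.isPreconnected (kzD_continuousOn hDo hD hl hy)
    (v := fun z => kzD D l y y' + kzD D l y' z)
    (continuousOn_const.add (kzD_continuousOn hDo hD hl hy')) ?_ hy' ?_ y'' hy''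
  · intro z hz
    have := hl y hy
    have := hl y' hy'
    rw [Complex.exp_add, kzD_exp hDo hD hl hy hz, kzD_exp hDo hD hl hy hy', kzD_exp hDo hD hl hy' hz]
    field_simp
  · simp [kzD_self hDo hD hl hy']

end family
end

section
variable {Y : Type*} [NormedAddCommGroup Y] [NormedSpace ℂ Y]
variable {X : Type*} [TopologicalSpace X] {W : Set (X × Y)} {l : Y →L[ℂ] ℂ}

lemma kz_factor [T2Space X] [LocallyCompactSpace X] (hW : IsOpen W)
    (hS : ∀ x, KzSC {y | (x, y) ∈ W})
    (hl : ∀ q ∈ W, l q.2 ≠ 0) {K : Set X} (hK : IsCompact K) (hne : ∀ x ∈ K, ∃ y, (x, y) ∈ W) :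
    ∃ (M : X × Y → ℂ) (e : X → ℂ), ContinuousOn M W ∧ ContinuousOn e K ∧ (∀ x ∈ K, e x ≠ 0) ∧
      ∀ q ∈ W, q.1 ∈ K → l q.2 = e q.1 * Complex.exp (M q) := by
  classical
  have hfo : ∀ y : Y, IsOpen {x : X | (x, y) ∈ W} := fun y => hW.preimage (by fun_prop)
  obtain ⟨T, hT⟩ := hK.elim_finite_subcover (fun y : Y => {x : X | (x, y) ∈ W}) hfo (by
    intro x hx
    obtain ⟨y, hy⟩ := hne x hx
    exact mem_iUnion.2 ⟨y, hy⟩)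
  let yy : Fin T.card → Y := fun i => (T.equivFin.symm i : Y)
  obtain ⟨ρ, hρs, hρ1, -, -⟩ := exists_continuous_sum_one_of_isOpen_isCompact
    (s := fun i => {x : X | (x, yy i) ∈ W}) (fun i => hfo _) hK (by
      intro x hx
      obtain ⟨y, hyT, hy⟩ := mem_iUnion₂.1 (hT hx)
      refine mem_iUnion.2 ⟨T.equivFin ⟨y, hyT⟩, ?_⟩
      simpa [yy] using hy)
  let M : X × Y → ℂ := fun q => ∑ i, (ρ i q.1 : ℂ) * kzD {y | (q.1, y) ∈ W} l (yy i) q.2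
  have hM : ContinuousOn M W := by
    apply continuousOn_finsetSum
    rintro i - ⟨x, y⟩ hq
    apply ContinuousAt.continuousWithinAt
    by_cases hx : x ∈ tsupport (ρ i)
    · have h1 : (x, yy i) ∈ W := hρs i hx
      apply ContinuousAt.mul
      · fun_prop
      · exact kzD_continuousAt hW hS hl h1 hq
    · have h2 : ∀ᶠ q : X × Y in 𝓝 (x, y), ρ i q.1 = 0 := by
        have h3 : ∀ᶠ x' in 𝓝 x, ρ i x' = 0 := by
          filter_upwards [(isClosed_tsupport (ρ i)).isOpen_compl.mem_nhds hx] with x' hx'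
          exact image_eq_zero_of_notMem_tsupport hx'
        exact (continuous_fst.tendsto (x, y)).eventually h3
      refine (continuousAt_const (y := (0:ℂ))).congr ?_
      filter_upwards [h2] with q hq
      simp [hq]
  have hdiff : ∀ x ∈ K, ∀ y y', (x, y) ∈ W → (x, y') ∈ W →
      M (x, y') = M (x, y) + kzD {y | (x, y) ∈ W} l y y' := by
    intro x hx y y' hy hy'
    have hsum : ∑ i, (ρ i x : ℂ) = 1 := by
      have := hρ1 hx
      simp only [ContinuousMap.coe_sum, Finset.sum_apply, Pi.one_apply] at this
      exact_mod_cast this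
    have : kzD {y | (x, y) ∈ W} l y y' = ∑ i, (ρ i x : ℂ) * kzD {y | (x, y) ∈ W} l y y' := by
      rw [← Finset.sum_mul, hsum, one_mul]
    rw [this]
    simp only [M]
    rw [← Finset.sum_add_distrib]
    apply Finset.sum_congr rfl
    intro i _
    by_cases h0 : ρ i x = 0
    · simp [h0]
    · have h1 : (x, yy i) ∈ W := hρs i (subset_tsupport _ h0)
      rw [kzD_cocycle (kz_fiber_open hW x) (hS x) (fun z hz => hl (x, z) hz) h1 hy hy']
      ring
  have hkey : ∀ x ∈ K, ∀ y y', (x, y) ∈ W → (x, y') ∈ W →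
      l y' * Complex.exp (-M (x, y')) = l y * Complex.exp (-M (x, y)) := by
    intro x hx y y' hy hy'
    have h1 := hl _ hy
    rw [hdiff x hx y y' hy hy', neg_add, Complex.exp_add, Complex.exp_neg (kzD _ _ _ _),
      kzD_exp (kz_fiber_open hW x) (hS x) (fun z hz => hl (x, z) hz) hy hy']
    have h2 := hl _ hy'
    simp only at h1 h2
    field_simp
  let sel : X → Y := fun x => if h : ∃ y, (x, y) ∈ W then h.choose else 0
  have hsel : ∀ x ∈ K, (x, sel x) ∈ W := by
    intro x hx
    simp only [sel, dif_pos (hne x hx)]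
    exact (hne x hx).choose_spec
  let e : X → ℂ := fun x => l (sel x) * Complex.exp (-M (x, sel x))
  refine ⟨M, e, hM, ?_, ?_, ?_⟩
  · intro x hx
    have h1 := hsel x hx
    have hc : ContinuousAt (fun x' => l (sel x) * Complex.exp (-M (x', sel x))) x := by
      have h2 : ContinuousAt M (x, sel x) := hM.continuousAt (hW.mem_nhds h1)
      have h3 : ContinuousAt (fun x' : X => (x', sel x)) x := by fun_prop
      have h4 : ContinuousAt (fun x' => M (x', sel x)) x :=
        ContinuousAt.comp (f := fun x' : X => (x', sel x)) h2 h3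
      fun_prop
    refine hc.continuousWithinAt.congr_of_eventuallyEq ?_ rfl
    filter_upwards [nhdsWithin_le_nhds ((hfo (sel x)).mem_nhds h1), self_mem_nhdsWithin] with x' hx' hx'K
    exact hkey x' hx'K _ _ hx' (hsel x' hx'K)
  · intro x hx
    exact mul_ne_zero (hl _ (hsel x hx)) (Complex.exp_ne_zero _)
  · rintro ⟨x, y⟩ hq hx
    simp only [e]
    rw [← hkey x hx (sel x) y (hsel x hx) hq |>.symm.symm, mul_assoc, ← Complex.exp_add]
    simp

end

lemma kz_pencil {V : Type*} [NormedAddCommGroup V] [NormedSpace ℂ V] {Ω : Set V} (hΩ : IsOpen Ω)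
    (hS : KzSC Ω) (N : Submodule ℂ V) (hN : ∀ x ∈ N, x ∉ Ω) (e₁ e₂ : V)
    (h : ∀ a b : ℂ, (a ≠ 0 ∨ b ≠ 0) → ∃ c : ℂ, ∃ m : N, c • (a • e₁ + b • e₂) + (m:V) ∈ Ω) : False := by
  let ζ : ℂ → V := fun τ => τ • e₁ + ((1 - ‖τ‖ : ℝ) : ℂ) • e₂
  have hζ : Continuous ζ := by fun_prop
  let W : Set (ℂ × (ℂ × N)) := {q | q.2.1 • ζ q.1 + (q.2.2 : V) ∈ Ω}
  have hW : IsOpen W := hΩ.preimage (by fun_prop)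
  have hWS : ∀ τ, KzSC {y | (τ, y) ∈ W} := by
    rintro τ ⟨c, m⟩ hy ⟨c', m'⟩ hy'
    have := hS _ hy _ hy'
    convert this using 2
    ext t
    simp only [W, mem_setOf_eq]
    rw [iff_iff_eq]
    congr 1
    simp only [Prod.mk_sub_mk, Prod.smul_mk, Prod.mk_add_mk, Submodule.coe_add, Submodule.coe_smul,
      Submodule.coe_sub, smul_eq_mul]
    module
  have hl : ∀ q ∈ W, ContinuousLinearMap.fst ℂ ℂ N q.2 ≠ 0 := by
    rintro ⟨τ, c, m⟩ hq h0
    simp only [ContinuousLinearMap.coe_fst'] at h0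
    subst h0
    simp only [W, mem_setOf_eq, zero_smul, zero_add] at hq
    exact hN _ m.2 hq
  have hne : ∀ τ ∈ closedBall (0:ℂ) 1, ∃ y, (τ, y) ∈ W := by
    intro τ _
    obtain ⟨c, m, hc⟩ := h τ ((1 - ‖τ‖ : ℝ) : ℂ) (by
      by_cases h0 : τ = 0
      · right; simp [h0]
      · left; exact h0)
    exact ⟨(c, m), hc⟩
  obtain ⟨M, e, hM, he, he0, hfac⟩ := kz_factor hW hWS hl (isCompact_closedBall (0:ℂ) 1) hne
  -- retraction onto the disc
  let r : ℂ → ℂ := fun z => ((max 1 ‖z‖ : ℝ) : ℂ)⁻¹ * z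
  have hmax : ∀ z : ℂ, (0:ℝ) < max 1 ‖z‖ := fun z => lt_of_lt_of_le one_pos (le_max_left _ _)
  have hr : Continuous r := by
    apply Continuous.mul _ continuous_id
    apply Continuous.inv₀ (by fun_prop)
    intro z
    exact_mod_cast (hmax z).ne'
  have hrm : ∀ z, r z ∈ closedBall (0:ℂ) 1 := by
    intro z
    simp only [r, mem_closedBall_zero_iff, norm_mul, norm_inv, Complex.norm_real,
      Real.norm_of_nonneg (hmax z).le]
    rw [inv_mul_le_iff₀ (hmax z), mul_one]
    exact le_max_right _ _
  obtain ⟨L, hL, hL'⟩ := Complex.exists_continuousOn_eqOn_exp_comp kz_sc_univ isOpen_univ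
    (g := fun z => e (r z)) (he.comp_continuous hr hrm).continuousOn (by
      rintro ⟨z, -, hz⟩
      exact he0 _ (hrm z) hz)
  rw [continuousOn_univ] at hL
  obtain ⟨c₀, m₀, hc₀⟩ := h 1 0 (by simp)
  let u : ℝ → ℂ := fun θ => Complex.exp (θ * Complex.I)
  have hu : Continuous u := by fun_prop
  have hun : ∀ θ, ‖u θ‖ = 1 := fun θ => Complex.norm_exp_ofReal_mul_I θ
  let q : ℝ → ℂ × (ℂ × N) := fun θ => (u θ, ((u θ)⁻¹ * c₀, m₀))
  have hu0 : ∀ θ, u θ ≠ 0 := fun θ => Complex.exp_ne_zero _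
  have hq : Continuous q := by
    have : Continuous fun θ => (u θ)⁻¹ := hu.inv₀ hu0
    fun_prop
  have hqW : ∀ θ, q θ ∈ W := by
    intro θ
    simp only [q, W, ζ, mem_setOf_eq, hun]
    convert hc₀ using 2
    simp only [sub_self, Complex.ofReal_zero, zero_smul, add_zero, one_smul, smul_smul]
    congr 1
    field_simp [hu0 θ]
  have hru : ∀ θ, r (u θ) = u θ := by intro θ; simp [r, hun]
  have hψ : ∀ θ, Complex.exp (L (u θ) + M (q θ)) = (u θ)⁻¹ * c₀ := by
    intro θ
    have h1 := hfac (q θ) (hqW θ) (by simp [q, hun])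
    have h2 := hL' (mem_univ (u θ))
    simp only [Function.comp_apply, hru] at h2
    rw [Complex.exp_add, h2]
    exact h1.symm
  have hcM : Continuous fun θ => M (q θ) := hM.comp_continuous hq hqW
  have hu00 : u 0 = 1 := by simp [u]
  have := kz_exp_unique (s := univ) isPreconnected_univ (u := fun θ : ℝ => L (u θ) + M (q θ))
    (v := fun θ : ℝ => L (u 0) + M (q 0) - θ * Complex.I) ((hL.comp hu).add hcM).continuousOn (by fun_prop)
    (by
      intro θ _
      rw [hψ, Complex.exp_sub, hψ, hu00]
      simp only [u]
      field_simp) (mem_univ 0) (by simp) (2 * Real.pi) (mem_univ _)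
  have hu2 : u (2 * Real.pi) = 1 := by
    simp only [u]
    push_cast
    exact Complex.exp_two_pi_mul_I
  have hq2 : q (2 * Real.pi) = q 0 := by simp only [q, hu2, hu00]
  simp only [hu2, hu00, hq2] at this
  have h5 : ((2 * Real.pi : ℝ) : ℂ) * Complex.I = 0 := by linear_combination this
  simp at h5

lemma kz_hyperplane {V : Type*} [NormedAddCommGroup V] [NormedSpace ℂ V] [FiniteDimensional ℂ V]
    {Ω : Set V} (hΩ : IsOpen Ω) (hS : KzSC Ω) (h0 : (0:V) ∉ Ω) {p : V} (hp : p ∈ Ω) :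
    ∃ l : V →L[ℂ] ℂ, ∀ x ∈ Ω, l x ≠ 0 := by
  obtain ⟨N, hN, hmax⟩ := exists_maximal_of_wellFoundedGT
    (fun N : Submodule ℂ V => ∀ x ∈ N, x ∉ Ω) ⟨⊥, by simpa using h0⟩
  have hpN : p ∉ N := fun h => hN p h hp
  have hext : ∀ z ∉ N, ∃ c : ℂ, ∃ m : N, c • z + (m:V) ∈ Ω := by
    intro z hz
    by_contra! hcon
    have : N ⊔ Submodule.span ℂ {z} ≤ N := by
      apply hmax _ le_sup_left
      intro x hx
      obtain ⟨m, hm, w, hw, rfl⟩ := Submodule.mem_sup.1 hx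
      obtain ⟨c, rfl⟩ := Submodule.mem_span_singleton.1 hw
      have := hcon c ⟨m, hm⟩
      rwa [add_comm] at this
    exact hz (this (le_sup_right (a := N) (Submodule.mem_span_singleton_self z)))
  have htop : ∀ x : V, x ∈ N ⊔ Submodule.span ℂ {p} := by
    intro e₂
    by_contra he
    apply kz_pencil hΩ hS N hN p e₂
    intro a b hab
    apply hext
    intro hmem
    by_cases hb : b = 0
    · subst hb
      have ha : a ≠ 0 := by simpa using hab
      apply hpN
      have := N.smul_mem a⁻¹ hmem
      simpa [smul_smul, inv_mul_cancel₀ ha] using this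
    · apply he
      have h1 : e₂ = b⁻¹ • (a • p + b • e₂) + (-(b⁻¹ * a)) • p := by
        rw [smul_add, smul_smul, smul_smul, inv_mul_cancel₀ hb]
        module
      rw [h1]
      apply Submodule.add_mem
      · exact le_sup_left (a := N) (N.smul_mem _ hmem)
      · exact le_sup_right (a := N) (Submodule.smul_mem _ _ (Submodule.mem_span_singleton_self p))
  obtain ⟨l, hlp, hlN⟩ := Submodule.exists_le_ker_of_notMem hpN
  refine ⟨l.toContinuousLinearMap, ?_⟩
  intro x hx hlx
  obtain ⟨m, hm, w, hw, rfl⟩ := Submodule.mem_sup.1 (htop x)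
  obtain ⟨c, rfl⟩ := Submodule.mem_span_singleton.1 hw
  have hlm : l m = 0 := hlN hm
  have h2 : c * l p = 0 := by simpa [hlm] using hlx
  rcases mul_eq_zero.1 h2 with h3 | h3
  · subst h3
    apply hN m hm
    simpa using hx
  · exact hlp h3

lemma kz_main {V : Type*} [NormedAddCommGroup V] [NormedSpace ℂ V] [FiniteDimensional ℂ V]
    {Ω : Set V} (hΩ : IsOpen Ω) (hS : KzSC Ω) {q : V} (hq : q ∉ Ω) {f : ℂ → V}
    (hf : DifferentiableOn ℂ f (ball 0 1)) (hfΩ : MapsTo f (ball 0 1) Ω) {c ξ : ℂ} {v : V}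
    (hqv : q = f 0 + c • v) (hξ : ξ • deriv f 0 = v) : 1 ≤ 4 * ‖c‖ * ‖ξ‖ := by
  have m0 : (0:ℂ) ∈ ball (0:ℂ) 1 := by simp
  let D : Set V := {x | x + q ∈ Ω}
  have hDo : IsOpen D := hΩ.preimage (by fun_prop)
  have hD : KzSC D := by
    intro y hy y' hy'
    have := hS _ hy _ hy'
    convert this using 2
    ext t
    simp only [D, mem_setOf_eq]
    rw [iff_iff_eq]
    congr 1
    module
  have hfD : ∀ z ∈ ball (0:ℂ) 1, f z - q ∈ D := by
    intro z hz
    simpa [D] using hfΩ hz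
  have hp := hfD 0 m0
  obtain ⟨l, hl⟩ := kz_hyperplane hDo hD (by simpa [D] using hq) hp
  -- global logarithm of l on D
  let Λ : V → ℂ := fun x => Complex.log (l (f 0 - q)) + kzD D l (f 0 - q) x
  have hΛc : ContinuousOn Λ D := continuousOn_const.add (kzD_continuousOn hDo hD hl hp)
  have hΛe : ∀ x ∈ D, Complex.exp (Λ x) = l x := by
    intro x hx
    simp only [Λ]
    rw [Complex.exp_add, Complex.exp_log (hl _ hp), kzD_exp hDo hD hl hp hx,
      mul_div_cancel₀ _ (hl _ hp)]
  have hΛeq : ∀ x ∈ D, ∀ y ∈ D, l x = l y → Λ x = Λ y := by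
    intro x hx y hy hxy
    have hc := (hD x hx y hy).isPathConnected.isConnected.isPreconnected
    have := kz_exp_unique hc (u := fun c : ℂ => Λ (x + c • (y - x))) (v := fun _ => Λ x)
      (hΛc.comp (by fun_prop) (fun c hc => hc)) continuousOn_const
      (by
        intro t ht
        rw [hΛe _ ht, hΛe _ hx]
        simp [hxy]) (a := 0) (by simpa using hx) (by simp) 1 (by simpa using hy)
    simp only [one_smul, add_sub_cancel] at this
    exact this.symm
  have hk := kz_koebe (g := fun z => l (f z - q)) (h := fun z => Complex.exp (Λ (f z - q) / 2))
    (by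
      apply l.differentiable.comp_differentiableOn
      exact hf.sub_const q)
    (by
      apply Complex.continuous_exp.comp_continuousOn
      apply ContinuousOn.div_const
      exact hΛc.comp (hf.continuousOn.sub continuousOn_const) hfD)
    (by
      intro z hz
      rw [← Complex.exp_nat_mul]
      push_cast
      rw [mul_div_cancel₀ _ two_ne_zero, hΛe _ (hfD z hz)])
    (by
      intro z hz w hw h
      have h1 : l (f z - q) = l (f w - q) := by
        rw [← hΛe _ (hfD z hz), ← hΛe _ (hfD w hw)]
        have h2 := eq_neg_of_add_eq_zero_left h
        have h3 := congrArg (fun t : ℂ => t ^ 2) h2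
        simp only [neg_sq] at h3
        rw [← Complex.exp_nat_mul, ← Complex.exp_nat_mul] at h3
        push_cast at h3
        rwa [mul_div_cancel₀ _ two_ne_zero, mul_div_cancel₀ _ two_ne_zero] at h3
      rw [hΛeq _ (hfD z hz) _ (hfD w hw) h1, ← two_mul] at h
      simp [Complex.exp_ne_zero] at h)
  have hfd : HasDerivAt f (deriv f 0) 0 :=
    (hf.differentiableAt (ball_mem_nhds _ one_pos)).hasDerivAt
  have hgd : HasDerivAt (fun z => l (f z - q)) (l (deriv f 0)) 0 :=
    l.hasFDerivAt.comp_hasDerivAt (0:ℂ) (hfd.sub_const q)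
  rw [hgd.deriv] at hk
  have hlp := hl _ hp
  have hlp' : 0 < ‖l (f 0 - q)‖ := norm_pos_iff.2 hlp
  have h1 : l (f 0 - q) = -(c * (ξ * l (deriv f 0))) := by
    have : f 0 - q = -(c • ξ • deriv f 0) := by rw [hξ, hqv]; abel
    rw [this]; simp
  have h2 : ‖l (f 0 - q)‖ = ‖c‖ * (‖ξ‖ * ‖l (deriv f 0)‖) := by
    rw [h1, norm_neg, norm_mul, norm_mul]
  have h3 : ‖l (f 0 - q)‖ ≤ 4 * ‖c‖ * ‖ξ‖ * ‖l (f 0 - q)‖ := by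
    calc _ = ‖c‖ * (‖ξ‖ * ‖l (deriv f 0)‖) := h2
      _ ≤ ‖c‖ * (‖ξ‖ * (4 * ‖l (f 0 - q)‖)) := by gcongr
      _ = _ := by ring
  exact le_of_mul_le_mul_right (by linarith) hlp'

theorem statement_15 {n : ℕ}
    (Ω : Set (EuclideanSpace ℂ (Fin n)))
    (hΩo : IsOpen Ω) (hΩc : IsConnected Ω) (hΩb : Bornology.IsBounded Ω)
    (hcc : CConvex Ω)
    (p : EuclideanSpace ℂ (Fin n)) (hp : p ∈ Ω) (v : EuclideanSpace ℂ (Fin n)) (hv : v ≠ 0) :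
    ‖v‖ / (4 * bdistDir Ω p v) ≤ kobMetric Ω p v := by
  have hv' : 0 < ‖v‖ := norm_pos_iff.2 hv
  have m0 : (0:ℂ) ∈ ball (0:ℂ) 1 := by simp
  unfold kobMetric
  apply le_csInf
  · obtain ⟨ε, hε, hb⟩ := Metric.isOpen_iff.1 hΩo p hp
    have hk : (0:ℝ) < ε / ‖v‖ := by positivity
    refine ⟨_, fun z => p + (z * ((ε / ‖v‖ : ℝ) : ℂ)) • v, ((ε / ‖v‖ : ℝ) : ℂ)⁻¹, ?_, ?_, by simp, ?_, rfl⟩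
    · fun_prop
    · intro z hz
      apply hb
      have hz' : ‖z‖ < 1 := by simpa using hz
      rw [mem_ball, dist_eq_norm, add_sub_cancel_left, norm_smul, norm_mul, Complex.norm_real,
        Real.norm_of_nonneg hk.le, mul_assoc, div_mul_cancel₀ _ hv'.ne']
      nlinarith
    · rw [derivWithin_of_isOpen isOpen_ball m0]
      have h1 : HasDerivAt (fun z : ℂ => p + (z * ((ε / ‖v‖ : ℝ) : ℂ)) • v)
          ((1 * ((ε / ‖v‖ : ℝ) : ℂ)) • v) 0 :=
        (((hasDerivAt_id (0:ℂ)).mul_const _).smul_const v).const_add p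
      rw [h1.deriv, one_mul, smul_smul, inv_mul_cancel₀, one_smul]
      exact_mod_cast hk.ne'
  · rintro r ⟨f, ξ, hf, hfΩ, hf0, hξ, rfl⟩
    rw [derivWithin_of_isOpen isOpen_ball m0] at hξ
    by_cases hd : bdistDir Ω p v = 0
    · simp [hd]
    have hd0 : 0 < bdistDir Ω p v := lt_of_le_of_ne Metric.infDist_nonneg (Ne.symm hd)
    have hξ0 : 0 < ‖ξ‖ := by
      rw [norm_pos_iff]
      rintro rfl
      exact hv (by rw [← hξ, zero_smul])
    have hne : (frontier Ω ∩ {w | ∃ c : ℂ, w = p + c • v}).Nonempty := by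
      by_contra hemp
      rw [not_nonempty_iff_eq_empty] at hemp
      apply hd
      simp [bdistDir, hemp]
    have hle : ‖v‖ / (4 * ‖ξ‖) ≤ bdistDir Ω p v := by
      unfold bdistDir
      rw [Metric.le_infDist hne]
      rintro q ⟨hq, c, hc⟩
      have hqΩ : q ∉ Ω := by
        rw [hΩo.frontier_eq] at hq
        exact hq.2
      have h1 := kz_main hΩo hcc.kzSC hqΩ hf hfΩ (c := c) (by rw [hf0]; exact hc) hξ
      rw [hc, dist_self_add_right, norm_smul, div_le_iff₀ (by positivity)]
      nlinarith
    rw [div_le_iff₀ (by positivity)] at hle ⊢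
    linarith
end

section
/- Let Ω ⊂ ℂⁿ be a bounded ℂ-convex domain. Then for all distinct points p, q ∈ Ω, the Kobayashi distance satisfies K_Ω(p,q) ≥ ¼ |log(1 + |p−q| / min{δ_Ω(p;p−q), δ_Ω(q;p−q)})|. -/
open Metric Set MeasureTheory Filter Topology

/-- Working form of `ℂ`-convexity. -/
structure GoodC {E : Type*} [NormedAddCommGroup E] [NormedSpace ℂ E] (Ω : Set E) : Prop where
  isOpen : IsOpen Ω
  slice : ∀ z v, z ∈ Ω → IsPathConnected {c : ℂ | z + c • v ∈ Ω}
  log : ∀ z v, z ∈ Ω → ∀ b : ℂ, (∀ ζ : ℂ, z + ζ • v ∈ Ω → 1 + ζ * b ≠ 0) →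
    ∃ G : ℂ → ℂ, ContinuousOn G {c : ℂ | z + c • v ∈ Ω} ∧ G 0 = 0 ∧
      ∀ ζ : ℂ, z + ζ • v ∈ Ω → Complex.exp (G ζ) = 1 + ζ * b

theorem isOpen_slice {E : Type*} [NormedAddCommGroup E] [NormedSpace ℂ E] {Ω : Set E}
    (ho : IsOpen Ω) (z v : E) : IsOpen {c : ℂ | z + c • v ∈ Ω} :=
  ho.preimage (by fun_prop)

theorem goodC_of_cconvex {E : Type*} [NormedAddCommGroup E] [NormedSpace ℂ E] {Ω : Set E}
    (ho : IsOpen Ω) (hc : CConvex Ω) : GoodC Ω := by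
  have key : ∀ z v, z ∈ Ω → IsSimplyConnected {c : ℂ | z + c • v ∈ Ω} := by
    intro z v hz
    by_cases hv : v = 0
    · have : {c : ℂ | z + c • v ∈ Ω} = univ := by ext c; simp [hv, hz]
      rw [this]
      have : SimplyConnectedSpace (univ : Set ℂ) :=
        (Homeomorph.Set.univ ℂ).toHomotopyEquiv.simplyConnectedSpace
      exact this
    · have h := (hc z v hv ⟨z, hz, 0, by simp⟩).2
      have hemb : IsEmbedding (fun c : ℂ => z + c • v) := by
        have h1 : IsEmbedding (fun c : ℂ => c • v) :=
          (isClosedEmbedding_smul_left hv).isEmbedding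
        exact (Homeomorph.addLeft z).isEmbedding.comp h1
      rw [← hemb.isSimplyConnected_image]
      have : (fun c : ℂ => z + c • v) '' {c : ℂ | z + c • v ∈ Ω}
          = Ω ∩ {w | ∃ c : ℂ, w = z + c • v} := by
        ext w
        constructor
        · rintro ⟨c, hc, rfl⟩
          exact ⟨hc, c, rfl⟩
        · rintro ⟨hw, c, rfl⟩
          exact ⟨c, hw, rfl⟩
      rw [this]
      exact h
  refine ⟨ho, fun z v hz => (key z v hz).isPathConnected, ?_⟩
  intro z v hz b hb
  obtain ⟨f, hf, hfe⟩ := Complex.exists_continuousOn_eqOn_exp_comp (key z v hz)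
    (isOpen_slice ho z v) (g := fun ζ => 1 + ζ * b) (by fun_prop)
    (by rintro ⟨ζ, hζ, h0⟩; exact hb ζ hζ h0)
  have h0 : (0 : ℂ) ∈ {c : ℂ | z + c • v ∈ Ω} := by simpa using hz
  refine ⟨fun ζ => f ζ - f 0, by fun_prop, by simp, fun ζ hζ => ?_⟩
  have e0 := hfe h0
  have e1 := hfe (show ζ ∈ {c : ℂ | z + c • v ∈ Ω} from hζ)
  simp only [Function.comp, zero_mul, add_zero] at e0 e1
  rw [Complex.exp_sub, e0, e1, div_one]

theorem isDiscrete_expOne : IsDiscrete {z : ℂ | Complex.exp z = 1} := by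
  have h := Complex.isCoveringMapOn_exp 1 (by simp)
  have := h.1
  have h2 : {z : ℂ | Complex.exp z = 1} = Complex.exp ⁻¹' {1} := by ext; simp
  rw [h2]
  exact ⟨this⟩

/-- Two continuous functions with the same exponential on a preconnected set differ by a
constant. -/
theorem const_of_exp_eq {X : Type*} [TopologicalSpace X] {S : Set X} (hS : IsPreconnected S)
    {f g : X → ℂ} (hf : ContinuousOn f S) (hg : ContinuousOn g S) {c : ℂ}
    (h : ∀ x ∈ S, Complex.exp (f x) = c * Complex.exp (g x))
    {x y : X} (hx : x ∈ S) (hy : y ∈ S) : f y - g y = f x - g x := by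
  have hc : Complex.exp (f x) / Complex.exp (g x) = c := by
    rw [h x hx]; field_simp [Complex.exp_ne_zero]
  have := hS.constant_of_mapsTo isDiscrete_expOne
    (f := fun u => (f u - g u) - (f x - g x)) (by fun_prop) (fun u hu => by
      have hc0 : c ≠ 0 := by
        rintro rfl
        exact Complex.exp_ne_zero (f x) (by simpa using h x hx)
      simp only [mem_ofPred_eq, Complex.exp_sub, h u hu, hc]
      field_simp [Complex.exp_ne_zero]) hy hx
  simpa [sub_eq_zero] using this

theorem local_log {E : Type*} [NormedAddCommGroup E] [NormedSpace ℂ E] {Ω : Set E}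
    (hG : GoodC Ω) (L : E →L[ℂ] ℂ) {U : Set E} (c : E → E) (hc : ContinuousOn c U)
    (hcΩ : ∀ y ∈ U, c y ∈ Ω) (hUΩ : U ⊆ Ω) {α : ℂ} (hα0 : α ≠ 0) (hα : ∀ y ∈ U, L (c y) = α)
    (hne : ∀ y ∈ U, ∀ ζ : ℂ, c y + ζ • (y - c y) ∈ Ω → L (c y + ζ • (y - c y)) ≠ 0) :
    ∃ lam : E → ℂ, ContinuousOn lam U ∧ ∀ y ∈ U, Complex.exp (lam y) = L y := by
  set b : E → ℂ := fun y => L y / α - 1 with hb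
  have hform : ∀ y ∈ U, ∀ ζ : ℂ, L (c y + ζ • (y - c y)) = α * (1 + ζ * b y) := by
    intro y hy ζ
    simp only [map_add, map_smul, map_sub, hα y hy, hb, smul_eq_mul]
    field_simp
  have hb0 : ∀ y ∈ U, ∀ ζ : ℂ, c y + ζ • (y - c y) ∈ Ω → 1 + ζ * b y ≠ 0 := by
    intro y hy ζ h h0
    apply hne y hy ζ h
    rw [hform y hy, h0, mul_zero]
  have hex : ∀ y : U, ∃ G : ℂ → ℂ, ContinuousOn G {ζ : ℂ | c y + ζ • (y - c y) ∈ Ω} ∧ G 0 = 0 ∧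
      ∀ ζ : ℂ, c y + ζ • (y - c y) ∈ Ω → Complex.exp (G ζ) = 1 + ζ * b y :=
    fun y => hG.log (c y) (y - c y) (hcΩ y y.2) (b y) (hb0 y y.2)
  choose G hGc hG0 hGe using hex
  have one_mem : ∀ y : U, c y + (1 : ℂ) • ((y : E) - c y) ∈ Ω := fun y => by
    simpa using hUΩ y.2
  set lam0 : U → ℂ := fun y => G y 1 + Complex.log α with hlam0
  have hexp0 : ∀ y : U, Complex.exp (lam0 y) = L y := by
    intro y
    rw [hlam0]
    simp only [Complex.exp_add, hGe y 1 (one_mem y), Complex.exp_log hα0, hb]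
    field_simp
    ring
  have hcU : Continuous (fun y : U => c y) := continuousOn_iff_continuous_domRestrict.mp hc
  have hbU : Continuous (fun y : U => b y) := by
    simp only [hb]; fun_prop
  have hLne : ∀ y : U, L y ≠ 0 := fun y => by rw [← hexp0 y]; exact Complex.exp_ne_zero _
  have hcont : Continuous lam0 := by
    rw [continuous_iff_continuousAt]
    intro y
    obtain ⟨γ, hγ⟩ := (hG.slice (c y) (y - c y) (hcΩ y y.2)).joinedIn 0 (by simpa using hcΩ y y.2)
      1 (one_mem y)
    set K : Set ℂ := range γ with hK
    have hKc : IsCompact K := isCompact_range γ.continuous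
    have hKp : IsPreconnected K := isPreconnected_range γ.continuous
    have h0K : (0 : ℂ) ∈ K := ⟨0, γ.source⟩
    have h1K : (1 : ℂ) ∈ K := ⟨1, γ.target⟩
    have hKZ : ∀ ζ ∈ K, c y + ζ • ((y : E) - c y) ∈ Ω := by
      rintro _ ⟨s, rfl⟩; exact hγ s
    have hev : ∀ᶠ y' : U in 𝓝 y, ∀ ζ ∈ K, (c y' + ζ • ((y' : E) - c y') ∈ Ω ∧
        (1 + ζ * b y') / (1 + ζ * b y) ∈ Complex.slitPlane) := by
      apply hKc.eventually_forall_of_forall_eventually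
      intro ζ hζ
      have hn := hb0 y y.2 ζ (hKZ ζ hζ)
      apply Filter.Eventually.and
      · have : Continuous (fun z : U × ℂ => c z.1 + z.2 • ((z.1 : E) - c z.1)) := by
          have h1 : Continuous (fun z : U × ℂ => c z.1) := hcU.comp continuous_fst
          exact h1.add (continuous_snd.smul ((continuous_subtype_val.comp continuous_fst).sub h1))
        exact (this.continuousAt (x := (y, ζ))).eventually (hG.isOpen.mem_nhds (hKZ ζ hζ))
      · have : ContinuousAt (fun z : U × ℂ => (1 + z.2 * b z.1) / (1 + z.2 * b y)) (y, ζ) := by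
          have h1 : Continuous (fun z : U × ℂ => b z.1) := hbU.comp continuous_fst
          apply ContinuousAt.div
          · fun_prop
          · fun_prop
          · exact hn
        refine this.eventually (Complex.isOpen_slitPlane.mem_nhds ?_)
        simp only [div_self hn]
        exact Complex.one_mem_slitPlane
    have heq : ∀ᶠ y' : U in 𝓝 y, lam0 y + Complex.log (L y' / L y) = lam0 y' := by
      filter_upwards [hev] with y' hy'
      have := const_of_exp_eq hKp (f := G y')
        (g := fun ζ => Complex.log ((1 + ζ * b y') / (1 + ζ * b y)) + G y ζ) (c := 1)
        ((hGc y').mono fun ζ hζ => (hy' ζ hζ).1)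
        (by
          apply ContinuousOn.add
          · apply ContinuousOn.clog
            · apply ContinuousOn.div
              · fun_prop
              · fun_prop
              · exact fun ζ hζ => hb0 y y.2 ζ (hKZ ζ hζ)
            · exact fun ζ hζ => (hy' ζ hζ).2
          · exact (hGc y).mono fun ζ hζ => hKZ ζ hζ)
        (fun ζ hζ => by
          have hn := hb0 y y.2 ζ (hKZ ζ hζ)
          have hn' := hb0 y' y'.2 ζ (hy' ζ hζ).1
          rw [Complex.exp_add, Complex.exp_log (div_ne_zero hn' hn), hGe y' ζ (hy' ζ hζ).1,
            hGe y ζ (hKZ ζ hζ)]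
          field_simp) h0K h1K
      have hr : (1 + (1 : ℂ) * b y') / (1 + 1 * b y) = L y' / L y := by
        have := hLne y
        have e : ∀ w : E, 1 + 1 * b w = L w / α := fun w => by simp only [hb]; ring
        rw [e, e, div_div_div_cancel_right₀ hα0]
      rw [hr] at this
      simp [hG0] at this
      simp only [hlam0]
      linear_combination -this
    have hc2 : ContinuousAt (fun y' : U => lam0 y + Complex.log (L y' / L y)) y := by
      apply ContinuousAt.add continuousAt_const
      apply ContinuousAt.clog
      · apply ContinuousAt.div
        · fun_prop
        · fun_prop
        · exact hLne y
      · rw [div_self (hLne y)]; exact Complex.one_mem_slitPlane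
    exact hc2.congr heq
  classical
  refine ⟨fun y => if h : y ∈ U then lam0 ⟨y, h⟩ else 0, ?_, ?_⟩
  · rw [continuousOn_iff_continuous_domRestrict]
    convert hcont using 1
    ext y
    simp [Set.domRestrict]
  · intro y hy
    simp only [hy, dif_pos]
    exact hexp0 ⟨y, hy⟩

/-- A nowhere vanishing linear functional has a continuous logarithm. -/
theorem global_log {E : Type*} [NormedAddCommGroup E] [NormedSpace ℂ E] {Ω : Set E}
    (hG : GoodC Ω) (L : E →L[ℂ] ℂ) (hL : ∀ x ∈ Ω, L x ≠ 0) :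
    ∃ lam : E → ℂ, ContinuousOn lam Ω ∧ ∀ y ∈ Ω, Complex.exp (lam y) = L y := by
  rcases Ω.eq_empty_or_nonempty with h | ⟨p, hp⟩
  · subst h
    exact ⟨0, by simp, by simp⟩
  · exact local_log hG L (fun _ => p) continuousOn_const (fun _ _ => hp) subset_rfl (hL p hp)
      (fun _ _ => rfl) (fun y _ ζ h => hL _ h)

theorem slice_const {E : Type*} [NormedAddCommGroup E] [NormedSpace ℂ E] {Ω : Set E}
    (hG : GoodC Ω) {x y : E} (hx : x ∈ Ω) (hy : y ∈ Ω) {S : Set E}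
    (hS : ∀ ζ : ℂ, x + ζ • (y - x) ∈ Ω → x + ζ • (y - x) ∈ S) {f g : E → ℂ} {c : ℂ}
    (hf : ContinuousOn f S) (hg : ContinuousOn g S)
    (h : ∀ z ∈ S, Complex.exp (f z) = c * Complex.exp (g z)) :
    f y - g y = f x - g x := by
  have hp := (hG.slice x (y - x) hx).isConnected.isPreconnected
  have hm : MapsTo (fun ζ : ℂ => x + ζ • (y - x)) {ζ : ℂ | x + ζ • (y - x) ∈ Ω} S := hS
  have hl : ContinuousOn (fun ζ : ℂ => x + ζ • (y - x)) {ζ : ℂ | x + ζ • (y - x) ∈ Ω} := by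
    fun_prop
  have := const_of_exp_eq hp (f := fun ζ => f (x + ζ • (y - x)))
    (g := fun ζ => g (x + ζ • (y - x))) (c := c) (hf.comp hl hm) (hg.comp hl hm)
    (fun ζ hζ => h _ (hS ζ hζ)) (x := 0) (y := 1) (by simpa using hx) (by simpa using hy)
  simpa using this

theorem tube_log {E : Type*} [NormedAddCommGroup E] [NormedSpace ℂ E] {Ω : Set E}
    (hG : GoodC Ω) (A B : E →L[ℂ] ℂ) (e : E) (hAe : A e = 0) (hBe : B e = 1)
    (hAB : ∀ x ∈ Ω, A x = 0 → B x ≠ 0) (hs : ∀ t : ℂ, ∃ x ∈ Ω, B x = t * A x) :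
    ∃ lam : E → ℂ, ContinuousOn lam {y ∈ Ω | A y ≠ 0} ∧
      ∀ y ∈ Ω, A y ≠ 0 → Complex.exp (lam y) = A y := by
  choose x0 hx0 hx0B using hs
  have hA0 : ∀ t, A (x0 t) ≠ 0 := fun t h => hAB _ (hx0 t) h (by rw [hx0B, h, mul_zero])
  set s : ℂ → ℂ → E := fun i t => x0 i + (A (x0 i) * (t - i)) • e with hsdef
  have hsc : ∀ i, Continuous (s i) := fun i => by simp only [hsdef]; fun_prop
  have hsA : ∀ i t, A (s i t) = A (x0 i) := fun i t => by simp [hsdef, hAe]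
  have hsB : ∀ i t, B (s i t) = t * A (x0 i) := fun i t => by
    simp [hsdef, hBe, hx0B]; ring
  have hr : ∀ i, ∃ r > 0, ∀ t ∈ ball i r, s i t ∈ Ω := by
    intro i
    have h1 : (s i) ⁻¹' Ω ∈ 𝓝 i := by
      apply (hsc i).continuousAt.preimage_mem_nhds
      apply hG.isOpen.mem_nhds
      simpa [hsdef] using hx0 i
    exact Metric.mem_nhds_iff.mp h1
  choose r hr0 hrΩ using hr
  set T : E → ℂ := fun y => B y / A y with hT
  set X : Set E := {y ∈ Ω | A y ≠ 0} with hX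
  have hTc : ContinuousOn T X := by
    apply ContinuousOn.div (by fun_prop) (by fun_prop)
    exact fun y hy => hy.2
  -- the line through two points of a slice
  have hline : ∀ x y : E, A x ≠ 0 → A y ≠ 0 → T x = T y → ∀ ζ : ℂ, x + ζ • (y - x) ∈ Ω →
      x + ζ • (y - x) ∈ X ∧ T (x + ζ • (y - x)) = T x := by
    intro x y hxA hyA hxy ζ hζ
    have hBx : B x = T x * A x := by simp only [hT]; field_simp
    have hBy : B y = T x * A y := by rw [hxy]; simp only [hT]; field_simp
    have hB : B (x + ζ • (y - x)) = T x * A (x + ζ • (y - x)) := by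
      simp only [map_add, map_smul, map_sub, smul_eq_mul, hBx, hBy]; ring
    have hne : A (x + ζ • (y - x)) ≠ 0 := fun h => hAB _ hζ h (by rw [hB, h, mul_zero])
    refine ⟨⟨hζ, hne⟩, ?_⟩
    show B _ / A _ = T x
    rw [hB]; field_simp
  have hsT : ∀ i t, T (s i t) = t := fun i t => by
    have := hA0 i
    simp only [hT, hsA, hsB]; field_simp
  set U : ℂ → Set E := fun i => {y ∈ X | T y ∈ ball i (r i)} with hU
  have hlam : ∀ i, ∃ lam : E → ℂ, ContinuousOn lam (U i) ∧
      ∀ y ∈ U i, Complex.exp (lam y) = A y := by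
    intro i
    apply local_log hG A (fun y => s i (T y)) (α := A (x0 i))
    · exact (hsc i).comp_continuousOn (hTc.mono fun y hy => hy.1)
    · exact fun y hy => hrΩ i _ hy.2
    · exact fun y hy => hy.1.1
    · exact hA0 i
    · exact fun y _ => hsA i _
    · intro y hy ζ hζ
      exact (hline _ y (by rw [hsA]; exact hA0 i) hy.1.2 (hsT i _) ζ hζ).1.2
  choose lam hlc hle using hlam
  obtain ⟨φ, hφ⟩ := PartitionOfUnity.exists_isSubordinate (X := ℂ) (s := univ) isClosed_univ
    (fun i : ℂ => ball i (r i)) (fun i => isOpen_ball)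
    (fun t _ => mem_iUnion.mpr ⟨t, mem_ball_self (hr0 t)⟩)
  set lm : E → ℂ := fun y => ∑ᶠ i, (φ i (T y) : ℝ) • lam i y with hlm
  have hfin : ∀ t, (Function.support fun i => φ i t).Finite := fun t =>
    φ.locallyFinite.point_finite t
  have hmem : ∀ i t, φ i t ≠ 0 → t ∈ ball i (r i) := fun i t h =>
    hφ i (subset_tsupport _ h)
  have hlmc : ContinuousOn lm X := by
    rw [continuousOn_iff_continuous_domRestrict]
    have hTX : Continuous (fun y : X => T y) := continuousOn_iff_continuous_domRestrict.mp hTc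
    show Continuous (fun y : X => ∑ᶠ i, (φ i (T y) : ℝ) • lam i y)
    apply continuous_finsum
    · intro i
      rw [continuous_iff_continuousAt]
      intro y
      by_cases hy : T y ∈ ball i (r i)
      · have hyU : (y : E) ∈ U i := ⟨y.2, hy⟩
        have h1 : ∀ᶠ y' : X in 𝓝 y, (y' : E) ∈ U i := by
          filter_upwards [hTX.continuousAt.eventually (isOpen_ball.mem_nhds hy)] with y' hy'
          exact ⟨y'.2, hy'⟩
        have h2 : ContinuousAt (fun y : X => lam i y) y :=
          (hlc i _ hyU).tendsto.comp (tendsto_nhdsWithin_iff.mpr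
            ⟨continuous_subtype_val.continuousAt, h1⟩)
        exact ((φ i).continuous.comp hTX).continuousAt.smul h2
      · have h1 : T y ∈ (tsupport (φ i))ᶜ := fun h => hy (hφ i h)
        have h2 : (fun y : X => (φ i (T y) : ℝ) • lam i y) =ᶠ[𝓝 y] fun _ => 0 := by
          filter_upwards [hTX.continuousAt.eventually
            ((isClosed_tsupport _).isOpen_compl.mem_nhds h1)] with y' hy'
          rw [image_eq_zero_of_notMem_tsupport hy', zero_smul]
        exact continuousAt_const.congr h2.symm
    · refine (φ.locallyFinite.preimage_continuous hTX).subset fun i y hy => ?_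
      rw [Function.mem_support] at hy
      exact fun h => hy (by
        rw [show φ i (T y) = 0 from h, zero_smul])
  have hkey : ∀ x ∈ X, ∀ y ∈ X, T x = T y →
      lm y - lm x = lam (T x) y - lam (T x) x := by
    intro x hx y hy hxy
    have hf1 : ∀ z : E, (Function.support fun i => (φ i (T z) : ℝ) • lam i z).Finite := fun z =>
      (hfin (T z)).subset fun i hi h => hi (by
        show (φ i (T z) : ℝ) • lam i z = 0
        rw [show φ i (T z) = 0 from h, zero_smul])
    have e1 : lm y - lm x = ∑ᶠ i, (φ i (T x) : ℝ) • (lam (T x) y - lam (T x) x) := by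
      simp only [hlm]
      rw [← finsum_sub_distrib (hf1 y) (hf1 x)]
      apply finsum_congr
      intro i
      rw [← hxy, ← smul_sub]
      by_cases h : φ i (T x) = 0
      · rw [h, zero_smul, zero_smul]
      congr 1
      have hb := hmem i _ h
      have := slice_const hG hx.1 hy.1 (S := {z ∈ X | T z = T x})
        (fun ζ hζ => hline x y hx.2 hy.2 hxy ζ hζ) (f := lam i) (g := lam (T x)) (c := 1)
        ((hlc i).mono fun z hz => ⟨hz.1, by rw [hz.2]; exact hb⟩)
        ((hlc (T x)).mono fun z hz => ⟨hz.1, by rw [hz.2]; exact mem_ball_self (hr0 _)⟩)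
        (fun z hz => by
          rw [hle i z ⟨hz.1, by rw [hz.2]; exact hb⟩,
            hle (T x) z ⟨hz.1, by rw [hz.2]; exact mem_ball_self (hr0 _)⟩, one_mul])
      linear_combination this
    rw [e1, ← finsum_smul, φ.sum_eq_one (mem_univ _), one_smul]
  have hkey2 : ∀ x ∈ X, ∀ y ∈ X, T x = T y →
      Complex.exp (lm y) / A y = Complex.exp (lm x) / A x := by
    intro x hx y hy hxy
    have h1 := hkey x hx y hy hxy
    have h2 : lm y = lm x + lam (T x) y - lam (T x) x := by linear_combination h1
    have hxA := hx.2
    have hyA := hy.2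
    rw [h2, Complex.exp_sub, Complex.exp_add,
      hle (T x) x ⟨hx, mem_ball_self (hr0 _)⟩,
      hle (T x) y ⟨hy, by rw [← hxy]; exact mem_ball_self (hr0 _)⟩]
    field_simp
  have hx0X : ∀ t, x0 t ∈ X := fun t => ⟨hx0 t, hA0 t⟩
  have hx0T : ∀ t, T (x0 t) = t := fun t => by
    have := hA0 t
    simp only [hT, hx0B]; field_simp
  set h : ℂ → ℂ := fun t => Complex.exp (lm (x0 t)) / A (x0 t) with hh
  have hsX : ∀ i t, t ∈ ball i (r i) → s i t ∈ X := fun i t ht =>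
    ⟨hrΩ i t ht, by rw [hsA]; exact hA0 i⟩
  have hhc : Continuous h := by
    rw [continuous_iff_continuousAt]
    intro i
    have h1 : (fun t => Complex.exp (lm (s i t)) / A (s i t)) =ᶠ[𝓝 i] h := by
      filter_upwards [ball_mem_nhds i (hr0 i)] with t ht
      exact hkey2 _ (hx0X t) _ (hsX i t ht) (by rw [hx0T, hsT])
    refine ContinuousAt.congr ?_ h1
    have h2 : ContinuousOn (fun t => lm (s i t)) (ball i (r i)) :=
      hlmc.comp (hsc i).continuousOn (fun t ht => hsX i t ht)
    have h3 := h2.continuousAt (ball_mem_nhds i (hr0 i))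
    apply ContinuousAt.div h3.cexp
    · exact (A.continuous.comp (hsc i)).continuousAt
    · rw [hsA]; exact hA0 i
  obtain ⟨H, hHc, hHe⟩ := Complex.exists_continuousOn_eqOn_exp_comp (U := univ)
    (by
      have : SimplyConnectedSpace (univ : Set ℂ) :=
        (Homeomorph.Set.univ ℂ).toHomotopyEquiv.simplyConnectedSpace
      exact this)
    isOpen_univ (g := h) hhc.continuousOn
    (by rintro ⟨t, _, ht⟩; exact div_ne_zero (Complex.exp_ne_zero _) (hA0 t) ht)
  refine ⟨fun y => lm y - H (T y), ?_, ?_⟩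
  · exact hlmc.sub (hHc.comp hTc (fun _ _ => mem_univ _))
  · intro y hy hyA
    have h1 := hHe (mem_univ (T y))
    simp only [Function.comp] at h1
    have h2 := hkey2 _ (hx0X (T y)) y ⟨hy, hyA⟩ (hx0T _)
    rw [Complex.exp_sub, h1]
    simp only [hh]
    rw [← h2]
    have := Complex.exp_ne_zero (lm y)
    field_simp

theorem two_func {E : Type*} [NormedAddCommGroup E] [NormedSpace ℂ E] {Ω : Set E}
    (hG : GoodC Ω) (A B : E →L[ℂ] ℂ) (hAB : ∀ x ∈ Ω, A x = 0 → B x ≠ 0) :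
    ∃ a b : ℂ, ∀ x ∈ Ω, a * A x + b * B x ≠ 0 := by
  by_contra! hcon
  obtain ⟨x1, hx1, h1⟩ := hcon 1 0
  obtain ⟨x2, hx2, h2⟩ := hcon 0 1
  simp only [one_mul, zero_mul, add_zero, zero_add] at h1 h2
  have h1B := hAB x1 hx1 h1
  have h2A : A x2 ≠ 0 := fun h => hAB x2 hx2 h h2
  set e : E := (B x1)⁻¹ • x1 with he
  have hAe : A e = 0 := by simp [he, h1]
  have hBe : B e = 1 := by simp [he, h1B]
  have hs : ∀ t : ℂ, ∃ x ∈ Ω, B x = t * A x := fun t => by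
    obtain ⟨x, hx, h⟩ := hcon (-t) 1
    exact ⟨x, hx, by linear_combination h⟩
  obtain ⟨l1, hl1, hl1e⟩ := tube_log hG A B e hAe hBe hAB hs
  obtain ⟨l2, hl2, hl2e⟩ := tube_log hG B A ((A x2)⁻¹ • x2) (by simp [h2]) (by simp [h2A])
    (fun x hx hB hA => hAB x hx hA hB) (fun t => by
      obtain ⟨x, hx, h⟩ := hcon 1 (-t)
      exact ⟨x, hx, by linear_combination h⟩)
  choose x0 hx0 hx0B using hs
  have hA0 : ∀ t, A (x0 t) ≠ 0 := fun t h => hAB _ (hx0 t) h (by rw [hx0B, h, mul_zero])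
  have hkey : ∀ t : ℂ, t ≠ 0 → ∀ y ∈ Ω, B y = t * A y →
      l2 y - l1 y = l2 (x0 t) - l1 (x0 t) := by
    intro t ht y hy hyB
    refine slice_const hG (hx0 t) hy (S := {z ∈ Ω | A z ≠ 0 ∧ B z = t * A z}) (c := t)
      ?_ ?_ ?_ ?_
    · intro ζ hζ
      have hB : B (x0 t + ζ • (y - x0 t)) = t * A (x0 t + ζ • (y - x0 t)) := by
        simp only [map_add, map_smul, map_sub, smul_eq_mul, hx0B, hyB]; ring
      exact ⟨hζ, fun h => hAB _ hζ h (by rw [hB, h, mul_zero]), hB⟩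
    · exact hl2.mono fun z hz => ⟨hz.1, by rw [hz.2.2]; exact mul_ne_zero ht hz.2.1⟩
    · exact hl1.mono fun z hz => ⟨hz.1, hz.2.1⟩
    · intro z hz
      rw [hl2e z hz.1 (by rw [hz.2.2]; exact mul_ne_zero ht hz.2.1), hl1e z hz.1 hz.2.1, hz.2.2]
  set u : ℂ → ℂ := fun t => l2 (x0 t) - l1 (x0 t) with hu
  have huc : ∀ t, t ≠ 0 → ContinuousAt u t := by
    intro i hi
    set s : ℂ → E := fun t => x0 i + (A (x0 i) * (t - i)) • e with hsdef
    have hsc : Continuous s := by simp only [hsdef]; fun_prop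
    have hsA : ∀ t, A (s t) = A (x0 i) := fun t => by simp [hsdef, hAe]
    have hsB : ∀ t, B (s t) = t * A (x0 i) := fun t => by
      simp [hsdef, hBe, hx0B]; ring
    have hsi : s i = x0 i := by simp [hsdef]
    have hev : ∀ᶠ t in 𝓝 i, s t ∈ Ω := hsc.continuousAt.eventually
      (hG.isOpen.mem_nhds (by rw [hsi]; exact hx0 i))
    have hev0 : ∀ᶠ t in 𝓝 i, t ≠ 0 := isOpen_ne.mem_nhds hi
    have heq : (fun t => l2 (s t) - l1 (s t)) =ᶠ[𝓝 i] u := by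
      filter_upwards [hev, hev0] with t ht ht0
      exact hkey t ht0 (s t) ht (by rw [hsA, hsB])
    refine ContinuousAt.congr ?_ heq
    have o1 : IsOpen {y ∈ Ω | A y ≠ 0} := hG.isOpen.inter (isOpen_ne.preimage A.continuous)
    have o2 : IsOpen {y ∈ Ω | B y ≠ 0} := hG.isOpen.inter (isOpen_ne.preimage B.continuous)
    apply ContinuousAt.sub
    · have : ContinuousAt l2 (s i) := hl2.continuousAt (o2.mem_nhds
        ⟨by rw [hsi]; exact hx0 i, by rw [hsB]; exact mul_ne_zero hi (hA0 i)⟩)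
      exact ContinuousAt.comp (f := s) this hsc.continuousAt
    · have : ContinuousAt l1 (s i) := hl1.continuousAt (o1.mem_nhds
        ⟨by rw [hsi]; exact hx0 i, by rw [hsA]; exact hA0 i⟩)
      exact ContinuousAt.comp (f := s) this hsc.continuousAt
  have hue : ∀ t, t ≠ 0 → Complex.exp (u t) = t := by
    intro t ht
    have := hA0 t
    rw [hu, Complex.exp_sub, hl2e _ (hx0 t) (by rw [hx0B]; exact mul_ne_zero ht this),
      hl1e _ (hx0 t) this, hx0B]
    field_simp
  have := const_of_exp_eq (S := (univ : Set ℂ)) isPreconnected_univ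
    (f := fun z => u (Complex.exp z)) (g := fun z => z) (c := 1)
    (by
      rw [continuousOn_univ, continuous_iff_continuousAt]
      intro z
      exact ContinuousAt.comp (f := Complex.exp) (huc _ (Complex.exp_ne_zero _))
        Complex.continuous_exp.continuousAt)
    continuousOn_id (fun z _ => by rw [hue _ (Complex.exp_ne_zero _), one_mul])
    (mem_univ 0) (mem_univ (2 * Real.pi * Complex.I))
  simp [Complex.exp_two_pi_mul_I] at this

theorem goodC_subspace {E : Type*} [NormedAddCommGroup E] [NormedSpace ℂ E] {Ω : Set E}
    (hG : GoodC Ω) (V : Submodule ℂ E) : GoodC ((↑) ⁻¹' Ω : Set V) where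
  isOpen := hG.isOpen.preimage continuous_subtype_val
  slice z v hz := hG.slice z v hz
  log z v hz := hG.log z v hz

theorem goodC_translate {E : Type*} [NormedAddCommGroup E] [NormedSpace ℂ E] {Ω : Set E}
    (hG : GoodC Ω) (ξ : E) : GoodC {x : E | x + ξ ∈ Ω} where
  isOpen := hG.isOpen.preimage (by fun_prop)
  slice z v hz := by
    have := hG.slice (z + ξ) v hz
    simpa [add_right_comm] using this
  log z v hz := by
    have := hG.log (z + ξ) v hz
    simpa [add_right_comm] using this

theorem many_func {E : Type*} [NormedAddCommGroup E] [NormedSpace ℂ E] {Ω : Set E}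
    (hG : GoodC Ω) (hne : Ω.Nonempty) (l : List (E →L[ℂ] ℂ))
    (h : ∀ x ∈ Ω, ∃ A ∈ l, A x ≠ 0) : ∃ A : E →L[ℂ] ℂ, ∀ x ∈ Ω, A x ≠ 0 := by
  induction hn : l.length generalizing l with
  | zero =>
    obtain ⟨x, hx⟩ := hne
    obtain ⟨A, hA, _⟩ := h x hx
    rw [List.length_eq_zero_iff.mp hn] at hA
    simp at hA
  | succ k ih =>
    match l, h, hn with
    | [A], h, _ =>
      exact ⟨A, fun x hx => by simpa using h x hx⟩
    | A :: B :: l, h, hn =>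
      let V : Submodule ℂ E :=
        { carrier := {x | ∀ C ∈ l, C x = 0}
          add_mem' := fun {x y} hx hy C hC => by
            show C (x + y) = 0
            rw [map_add, hx C hC, hy C hC, add_zero]
          zero_mem' := fun C _ => map_zero C
          smul_mem' := fun c x hx C hC => by
            show C (c • x) = 0
            rw [map_smul, hx C hC, smul_zero] }
      obtain ⟨a, b, hab⟩ := two_func (goodC_subspace hG V) (A.comp V.subtypeL) (B.comp V.subtypeL)
        (by
          intro x hx hA hB
          obtain ⟨C, hC, hCx⟩ := h x hx
          simp only [List.mem_cons] at hC
          rcases hC with rfl | rfl | hC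
          · exact hCx hA
          · exact hCx hB
          · exact hCx (x.2 C hC))
      refine ih ((a • A + b • B) :: l) ?_ (by simpa using hn)
      intro x hx
      by_cases hV : x ∈ V
      · exact ⟨_, List.mem_cons_self, by simpa using hab ⟨x, hV⟩ hx⟩
      · have : ∃ C ∈ l, C x ≠ 0 := by
          by_contra! hc
          exact hV hc
        obtain ⟨C, hC, hCx⟩ := this
        exact ⟨C, List.mem_cons_of_mem _ hC, hCx⟩

theorem supporting {n : ℕ} {Ω : Set (EuclideanSpace ℂ (Fin n))} (hG : GoodC Ω)
    (hne : Ω.Nonempty) (ξ : EuclideanSpace ℂ (Fin n)) (hξ : ξ ∉ Ω) :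
    ∃ A : EuclideanSpace ℂ (Fin n) →L[ℂ] ℂ, ∀ x ∈ Ω, A (x - ξ) ≠ 0 := by
  obtain ⟨A, hA⟩ := many_func (goodC_translate hG ξ)
    (by obtain ⟨x, hx⟩ := hne; exact ⟨x - ξ, by simpa using hx⟩)
    ((List.finRange n).map fun i => EuclideanSpace.proj i)
    (by
      intro x hx
      by_contra! hc
      apply hξ
      have : x = 0 := by
        ext i
        have := hc (EuclideanSpace.proj i) (by simp)
        simpa using this
      simpa [this] using hx)
  exact ⟨A, fun x hx => hA _ (by simpa using hx)⟩

/-- Double integral over the torus. -/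
noncomputable def II (F : ℝ → ℝ → ℝ) : ℝ :=
  ∫ s in (0:ℝ)..(2 * Real.pi), ∫ t in (0:ℝ)..(2 * Real.pi), F s t

theorem II_inner_cont {F : ℝ → ℝ → ℝ} (hF : Continuous (Function.uncurry F)) :
    Continuous fun s => ∫ t in (0:ℝ)..(2 * Real.pi), F s t :=
  intervalIntegral.continuous_parametric_intervalIntegral_of_continuous' hF _ _

theorem II_right_cont {F : ℝ → ℝ → ℝ} (hF : Continuous (Function.uncurry F)) (s : ℝ) :
    Continuous (F s) := hF.comp (by fun_prop : Continuous fun t : ℝ => (s, t))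

theorem II_mono {F G : ℝ → ℝ → ℝ} (hF : Continuous (Function.uncurry F))
    (hG : Continuous (Function.uncurry G)) (h : ∀ s t, F s t ≤ G s t) : II F ≤ II G := by
  have hp : (0:ℝ) ≤ 2 * Real.pi := Real.two_pi_pos.le
  refine intervalIntegral.integral_mono_on hp ((II_inner_cont hF).intervalIntegrable _ _)
    ((II_inner_cont hG).intervalIntegrable _ _) fun s _ => ?_
  exact intervalIntegral.integral_mono_on hp ((II_right_cont hF s).intervalIntegrable _ _)
    ((II_right_cont hG s).intervalIntegrable _ _) fun t _ => h s t

theorem II_add {F G : ℝ → ℝ → ℝ} (hF : Continuous (Function.uncurry F))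
    (hG : Continuous (Function.uncurry G)) : II (fun s t => F s t + G s t) = II F + II G := by
  unfold II
  rw [← intervalIntegral.integral_add ((II_inner_cont hF).intervalIntegrable _ _)
    ((II_inner_cont hG).intervalIntegrable _ _)]
  congr 1
  ext s
  rw [← intervalIntegral.integral_add ((II_right_cont hF s).intervalIntegrable _ _)
    ((II_right_cont hG s).intervalIntegrable _ _)]

theorem II_mul (c : ℝ) (F : ℝ → ℝ → ℝ) : II (fun s t => c * F s t) = c * II F := by
  unfold II
  simp only [intervalIntegral.integral_const_mul]

theorem II_const (c : ℝ) : II (fun _ _ => c) = (2 * Real.pi) ^ 2 * c := by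
  simp only [II, intervalIntegral.integral_const, smul_eq_mul, sub_zero]; ring

theorem II_swap {F : ℝ → ℝ → ℝ} (hF : Continuous (Function.uncurry F)) :
    II F = II (fun s t => F t s) := by
  unfold II
  simp only [intervalIntegral.integral_of_le Real.two_pi_pos.le]
  apply MeasureTheory.integral_integral_swap
  rw [Measure.prod_restrict]
  apply (hF.continuousOn.integrableOn_compact
    (isCompact_Icc.prod isCompact_Icc) (K := Icc 0 (2 * Real.pi) ×ˢ Icc 0 (2 * Real.pi))).mono_set
  exact prod_mono Ioc_subset_Icc_self Ioc_subset_Icc_self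

/-- Finite sums of kernels `φ(s)φ(t)`. -/
inductive PK : (ℝ → ℝ → ℝ) → Prop
  | base (φ : ℝ → ℝ) (K : ℝ → ℝ → ℝ) (h : Continuous φ) (hK : ∀ s t, K s t = φ s * φ t) : PK K
  | add (K L M : ℝ → ℝ → ℝ) (hK : PK K) (hL : PK L) (h : ∀ s t, M s t = K s t + L s t) : PK M

theorem PK.cont {K : ℝ → ℝ → ℝ} (h : PK K) : Continuous (Function.uncurry K) := by
  induction h with
  | base φ K h hK =>
    have : Function.uncurry K = fun p => φ p.1 * φ p.2 := by ext ⟨s, t⟩; exact hK s t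
    rw [this]; fun_prop
  | add K L M _ _ h ihK ihL =>
    have : Function.uncurry M = fun p => Function.uncurry K p + Function.uncurry L p := by
      ext ⟨s, t⟩; exact h s t
    rw [this]; fun_prop

theorem PK.nonneg {K : ℝ → ℝ → ℝ} (h : PK K) : 0 ≤ II K := by
  induction h with
  | base φ K h hK =>
    have : II K = (∫ t in (0:ℝ)..(2 * Real.pi), φ t) * ∫ t in (0:ℝ)..(2 * Real.pi), φ t := by
      unfold II
      simp only [hK, intervalIntegral.integral_const_mul, intervalIntegral.integral_mul_const]
    rw [this]; exact mul_self_nonneg _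
  | add K L M hK hL h ihK ihL =>
    have : M = fun s t => K s t + L s t := by ext s t; exact h s t
    rw [this, II_add hK.cont hL.cont]
    exact add_nonneg ihK ihL

theorem PK.add' {K L : ℝ → ℝ → ℝ} (hK : PK K) (hL : PK L) : PK (fun s t => K s t + L s t) :=
  PK.add K L _ hK hL fun _ _ => rfl

theorem PK.zero : PK (fun _ _ => 0) := PK.base (fun _ => 0) _ continuous_const (by simp)

theorem PK.const {c : ℝ} (hc : 0 ≤ c) : PK (fun _ _ => c) :=
  PK.base (fun _ => Real.sqrt c) _ continuous_const (fun _ _ => (Real.mul_self_sqrt hc).symm)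

theorem PK.mul {K L : ℝ → ℝ → ℝ} (hK : PK K) (hL : PK L) : PK (fun s t => K s t * L s t) := by
  induction hK with
  | base φ K h hK =>
    induction hL with
    | base ψ L h' hL =>
      exact PK.base (fun s => φ s * ψ s) _ (by fun_prop) (fun s t => by rw [hK, hL]; ring)
    | add L L' M _ _ h ihK ihL =>
      exact PK.add _ _ _ ihK ihL (fun s t => by rw [h]; ring)
  | add K K' M _ _ h ihK ihL =>
    exact PK.add _ _ _ ihK ihL (fun s t => by rw [h]; ring)

theorem PK.pow_pair {X Y : ℝ → ℝ → ℝ} (hX : PK X) (hY : PK Y) (m : ℕ) :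
    PK (fun s t => (X s t + Y s t) ^ m - (X s t - Y s t) ^ m) ∧
    PK (fun s t => (X s t + Y s t) ^ m + (X s t - Y s t) ^ m) := by
  induction m with
  | zero =>
    refine ⟨?_, ?_⟩
    · simpa using PK.zero
    · simpa using PK.const (c := 1 + 1) (by norm_num)
  | succ m ih =>
    refine ⟨PK.add _ _ _ (hX.mul ih.1) (hY.mul ih.2) fun s t => by ring,
      PK.add _ _ _ (hX.mul ih.2) (hY.mul ih.1) fun s t => by ring⟩

theorem PK.sum {K : ℕ → ℝ → ℝ → ℝ} (h : ∀ m, PK (K m)) (N : ℕ) :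
    PK (fun s t => ∑ m ∈ Finset.range N, K m s t) := by
  induction N with
  | zero => simpa using PK.zero
  | succ N ih =>
    exact PK.add _ _ _ ih (h N) fun s t => by rw [Finset.sum_range_succ]

theorem II_nonneg_of_approx {F : ℝ → ℝ → ℝ} (hF : Continuous (Function.uncurry F))
    (h : ∀ ε > 0, ∃ K, PK K ∧ ∀ s t, |F s t - K s t| ≤ ε) : 0 ≤ II F := by
  have hp := Real.two_pi_pos
  apply le_of_forall_pos_le_add
  intro ε hε
  obtain ⟨K, hK, hKF⟩ := h (ε / (2 * Real.pi) ^ 2) (by positivity)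
  have h1 : II K ≤ II (fun s t => F s t + ε / (2 * Real.pi) ^ 2) := by
    apply II_mono hK.cont
    · exact hF.add continuous_const
    · intro s t
      have := abs_le.mp (hKF s t)
      linarith [this.1]
  rw [II_add hF continuous_const, II_const] at h1
  have h2 : (2 * Real.pi) ^ 2 * (ε / (2 * Real.pi) ^ 2) = ε := by field_simp
  linarith [hK.nonneg]

theorem energy (G : ℝ → ℂ) (hG : Continuous G) {η : ℝ} (hη : 0 < η) :
    II (fun s t => Real.log (‖G s - G t‖ ^ 2 + η * ((1 + ‖G s‖ ^ 2) * (1 + ‖G t‖ ^ 2)))) ≤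
    II (fun s t => Real.log (‖G s + G t‖ ^ 2 + η * ((1 + ‖G s‖ ^ 2) * (1 + ‖G t‖ ^ 2)))) := by
  set Fm : ℝ → ℝ → ℝ :=
    fun s t => Real.log (‖G s - G t‖ ^ 2 + η * ((1 + ‖G s‖ ^ 2) * (1 + ‖G t‖ ^ 2))) with hFm
  set Fp : ℝ → ℝ → ℝ :=
    fun s t => Real.log (‖G s + G t‖ ^ 2 + η * ((1 + ‖G s‖ ^ 2) * (1 + ‖G t‖ ^ 2))) with hFp
  have cFm : Continuous (Function.uncurry Fm) := by
    show Continuous fun p : ℝ × ℝ => Real.log (‖G p.1 - G p.2‖ ^ 2 +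
      η * ((1 + ‖G p.1‖ ^ 2) * (1 + ‖G p.2‖ ^ 2)))
    apply Continuous.log (by fun_prop)
    intro p
    positivity
  have cFp : Continuous (Function.uncurry Fp) := by
    show Continuous fun p : ℝ × ℝ => Real.log (‖G p.1 + G p.2‖ ^ 2 +
      η * ((1 + ‖G p.1‖ ^ 2) * (1 + ‖G p.2‖ ^ 2)))
    apply Continuous.log (by fun_prop)
    intro p
    positivity
  set p : ℝ → ℝ := fun s => (1 - ‖G s‖ ^ 2) / (1 + ‖G s‖ ^ 2) with hp
  set a1 : ℝ → ℝ := fun s => 2 * (G s).re / (1 + ‖G s‖ ^ 2) with ha1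
  set a2 : ℝ → ℝ := fun s => 2 * (G s).im / (1 + ‖G s‖ ^ 2) with ha2
  have hw : ∀ s, (1 + ‖G s‖ ^ 2) ≠ 0 := fun s => by positivity
  have cp : Continuous p := by
    simp only [hp]; exact Continuous.div (by fun_prop) (by fun_prop) hw
  have c1 : Continuous a1 := by
    simp only [ha1]
    exact Continuous.div (continuous_const.mul (Complex.continuous_re.comp hG)) (by fun_prop) hw
  have c2 : Continuous a2 := by
    simp only [ha2]
    exact Continuous.div (continuous_const.mul (Complex.continuous_im.comp hG)) (by fun_prop) hw
  set X : ℝ → ℝ → ℝ := fun s t => p s * p t with hX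
  set Y : ℝ → ℝ → ℝ := fun s t => a1 s * a1 t + a2 s * a2 t with hY
  have kX : PK X := PK.base p _ cp fun _ _ => rfl
  have kY : PK Y := PK.add _ _ _ (PK.base a1 _ c1 fun _ _ => rfl)
    (PK.base a2 _ c2 fun _ _ => rfl) fun _ _ => rfl
  have hsq : ∀ s, ‖G s‖ ^ 2 = (G s).re ^ 2 + (G s).im ^ 2 := fun s => by
    rw [Complex.sq_norm, Complex.normSq_apply]; ring
  have hunit : ∀ s, p s ^ 2 + a1 s ^ 2 + a2 s ^ 2 = 1 := fun s => by
    have := hw s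
    simp only [hp, ha1, ha2]
    field_simp
    rw [hsq]; ring
  have hm1 : ∀ s t, |X s t - Y s t| ≤ 1 := fun s t => by
    have h1 := hunit s
    have h2 := hunit t
    rw [abs_le]
    constructor <;> simp only [hX, hY] <;>
    nlinarith [sq_nonneg (p s - p t), sq_nonneg (a1 s + a1 t), sq_nonneg (a2 s + a2 t),
      sq_nonneg (p s + p t), sq_nonneg (a1 s - a1 t), sq_nonneg (a2 s - a2 t)]
  have hp1 : ∀ s t, |X s t + Y s t| ≤ 1 := fun s t => by
    have h1 := hunit s
    have h2 := hunit t
    rw [abs_le]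
    constructor <;> simp only [hX, hY] <;>
    nlinarith [sq_nonneg (p s - p t), sq_nonneg (a1 s + a1 t), sq_nonneg (a2 s + a2 t),
      sq_nonneg (p s + p t), sq_nonneg (a1 s - a1 t), sq_nonneg (a2 s - a2 t)]
  set θ : ℝ := 1 / (1 + 2 * η) with hθ
  have hθ0 : 0 < θ := by positivity
  have hθ1 : θ < 1 := by rw [hθ, div_lt_one (by positivity)]; linarith
  have habs : ∀ x : ℝ, |x| ≤ 1 → |θ * x| ≤ θ := fun x hx => by
    rw [abs_mul, abs_of_pos hθ0]; nlinarith
  have hpos : ∀ x : ℝ, |x| ≤ 1 → 0 < 1 - θ * x := fun x hx => by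
    have := (abs_le.mp (habs x hx)).2; linarith
  have idm : ∀ s t, ‖G s - G t‖ ^ 2 + η * ((1 + ‖G s‖ ^ 2) * (1 + ‖G t‖ ^ 2)) =
      ((1 / 2 + η) * ((1 + ‖G s‖ ^ 2) * (1 + ‖G t‖ ^ 2))) * (1 - θ * (X s t + Y s t)) := by
    intro s t
    have e1 : ‖G s - G t‖ ^ 2 = ((G s).re - (G t).re) ^ 2 + ((G s).im - (G t).im) ^ 2 := by
      rw [Complex.sq_norm, Complex.normSq_apply]; simp; ring
    have h1 := hw s
    have h2 := hw t
    simp only [hθ, hX, hY, hp, ha1, ha2]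
    field_simp
    rw [e1, hsq, hsq]; ring
  have idp : ∀ s t, ‖G s + G t‖ ^ 2 + η * ((1 + ‖G s‖ ^ 2) * (1 + ‖G t‖ ^ 2)) =
      ((1 / 2 + η) * ((1 + ‖G s‖ ^ 2) * (1 + ‖G t‖ ^ 2))) * (1 - θ * (X s t - Y s t)) := by
    intro s t
    have e1 : ‖G s + G t‖ ^ 2 = ((G s).re + (G t).re) ^ 2 + ((G s).im + (G t).im) ^ 2 := by
      rw [Complex.sq_norm, Complex.normSq_apply]; simp; ring
    have h1 := hw s
    have h2 := hw t
    simp only [hθ, hX, hY, hp, ha1, ha2]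
    field_simp
    rw [e1, hsq, hsq]; ring
  have hdiff : ∀ s t, Fp s t - Fm s t =
      Real.log (1 - θ * (X s t - Y s t)) - Real.log (1 - θ * (X s t + Y s t)) := by
    intro s t
    simp only [hFp, hFm]
    rw [idm, idp, Real.log_mul (by positivity) (hpos _ (hm1 s t)).ne',
      Real.log_mul (by positivity) (hpos _ (hp1 s t)).ne']
    ring
  have key : 0 ≤ II (fun s t => Fp s t + (-1) * Fm s t) := by
    apply II_nonneg_of_approx
    · exact cFp.add (continuous_const.mul cFm)
    intro ε hε
    have htend : Tendsto (fun N : ℕ => 2 * (θ ^ (N + 1) / (1 - θ))) atTop (𝓝 (2 * (0 / (1 - θ)))) := by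
      apply Tendsto.const_mul
      apply Tendsto.div_const
      exact (tendsto_add_atTop_iff_nat 1).mpr (tendsto_pow_atTop_nhds_zero_of_lt_one hθ0.le hθ1)
    rw [zero_div, mul_zero] at htend
    obtain ⟨N, hN⟩ := (htend.eventually (gt_mem_nhds hε)).exists
    refine ⟨fun s t => ∑ m ∈ Finset.range N, (θ ^ (m + 1) / (m + 1)) *
      ((X s t + Y s t) ^ (m + 1) - (X s t - Y s t) ^ (m + 1)),
      PK.sum (fun m => (PK.const (by positivity)).mul (kX.pow_pair kY (m + 1)).1) N, ?_⟩
    intro s t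
    have est : ∀ x : ℝ, |x| ≤ 1 →
        |(∑ i ∈ Finset.range N, (θ * x) ^ (i + 1) / (i + 1)) + Real.log (1 - θ * x)| ≤
        θ ^ (N + 1) / (1 - θ) := by
      intro x hx
      have h0 := habs x hx
      refine (Real.abs_log_sub_add_sum_range_le (lt_of_le_of_lt h0 hθ1) N).trans ?_
      have : 0 < 1 - θ := by linarith
      gcongr
    have e1 := est _ (hm1 s t)
    have e2 := est _ (hp1 s t)
    have e3 : ∑ m ∈ Finset.range N, (θ ^ (m + 1) / (m + 1)) *
      ((X s t + Y s t) ^ (m + 1) - (X s t - Y s t) ^ (m + 1)) =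
      (∑ i ∈ Finset.range N, (θ * (X s t + Y s t)) ^ (i + 1) / (i + 1)) -
      (∑ i ∈ Finset.range N, (θ * (X s t - Y s t)) ^ (i + 1) / (i + 1)) := by
      rw [← Finset.sum_sub_distrib]
      apply Finset.sum_congr rfl
      intro m _
      rw [mul_pow, mul_pow]; ring
    have e4 : Fp s t + (-1) * Fm s t = Fp s t - Fm s t := by ring
    beta_reduce
    rw [e4, hdiff, e3]
    rw [abs_le] at e1 e2 ⊢
    constructor <;> linarith [e1.1, e1.2, e2.1, e2.2]
  have hadd := II_add cFp (G := fun s t => (-1) * Fm s t)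
    (show Continuous (fun p : ℝ × ℝ => (-1) * Function.uncurry Fm p) from by fun_prop)
  rw [hadd, II_mul] at key
  linarith

theorem jensen_le {h : ℂ → ℂ} {r : ℝ} (hr : 0 < r) (hh : AnalyticOnNhd ℂ h (closedBall 0 |r|))
    (h0 : h 0 ≠ 0) : Real.log ‖h 0‖ ≤ Real.circleAverage (fun z => Real.log ‖h z‖) 0 r := by
  rw [AnalyticOnNhd.circleAverage_log_norm hr.ne' hh h0]
  have : 0 ≤ ∑ᶠ (u : ℂ), ((MeromorphicOn.divisor h (closedBall 0 |r|)) u : ℝ) *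
      Real.log (r * ‖(0:ℂ) - u‖⁻¹) := by
    apply finsum_nonneg
    intro u
    by_cases hu : u ∈ closedBall (0:ℂ) |r|
    · apply mul_nonneg
      · have := MeromorphicOn.AnalyticOnNhd.divisor_nonneg hh u
        exact_mod_cast this
      · by_cases hu0 : u = 0
        · simp [hu0]
        · have hn : 0 < ‖u‖ := norm_pos_iff.mpr hu0
          rw [abs_of_pos hr, mem_closedBall_zero_iff] at hu
          apply Real.log_nonneg
          rw [zero_sub, norm_neg, ← div_eq_mul_inv, le_div_iff₀ hn, one_mul]
          exact hu
    · rw [Function.locallyFinsuppWithin.apply_eq_zero_of_notMem _ hu]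
      simp
  linarith

theorem avg_reg_ge {h : ℂ → ℂ} {r : ℝ} (hr : 0 < r) (hh : AnalyticOnNhd ℂ h (closedBall 0 |r|))
    (h0 : h 0 ≠ 0) {η : ℝ} (hη : 0 < η) :
    2 * Real.log ‖h 0‖ ≤ Real.circleAverage (fun z => Real.log (‖h z‖ ^ 2 + η)) 0 r := by
  classical
  set f1 : ℂ → ℝ := fun z => if h z = 0 then Real.log η else 2 • Real.log ‖h z‖ with hf1
  have hsub : sphere (0:ℂ) |r| ⊆ closedBall 0 |r| := sphere_subset_closedBall
  have hcod : (fun z => (2:ℝ) • Real.log ‖h z‖) =ᶠ[codiscreteWithin (sphere (0:ℂ) |r|)] f1 := by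
    have h1 := hh.preimage_zero_mem_codiscreteWithin h0 (by simp)
      ((convex_closedBall (0:ℂ) |r|).isConnected ⟨0, by simp⟩)
    have h2 := Filter.codiscreteWithin_mono hsub h1
    filter_upwards [h2] with z hz
    have : h z ≠ 0 := hz
    simp [hf1, this]
  have hi : CircleIntegrable (fun z => Real.log ‖h z‖) 0 r :=
    MeromorphicOn.circleIntegrable_log_norm (fun z hz => (hh z (hsub hz)).meromorphicAt)
  have hi2 : CircleIntegrable (fun z => (2:ℝ) • Real.log ‖h z‖) 0 r := hi.const_fun_smul
  have hi1 : CircleIntegrable f1 0 r := hi2.congr_codiscreteWithin hcod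
  have hc : ContinuousOn (fun z => Real.log (‖h z‖ ^ 2 + η)) (sphere 0 |r|) := by
    have : ContinuousOn h (sphere 0 |r|) := hh.continuousOn.mono hsub
    apply ContinuousOn.log (by fun_prop)
    intro z _
    positivity
  calc 2 * Real.log ‖h 0‖ ≤ 2 * Real.circleAverage (fun z => Real.log ‖h z‖) 0 r := by
        linarith [jensen_le hr hh h0]
    _ = Real.circleAverage (fun z => (2:ℝ) • Real.log ‖h z‖) 0 r := by
        rw [Real.circleAverage_fun_smul, smul_eq_mul]
    _ = Real.circleAverage f1 0 r := Real.circleAverage_congr_codiscreteWithin hcod hr.ne'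
    _ ≤ _ := by
        apply Real.circleAverage_mono hi1 hc.circleIntegrable'
        intro z hz
        by_cases hz0 : h z = 0
        · simp [hf1, hz0]
        · simp only [hf1, hz0, if_false]
          have hn : 0 < ‖h z‖ := norm_pos_iff.mpr hz0
          rw [nsmul_eq_mul, ← Real.log_pow]
          apply Real.log_le_log (by positivity)
          linarith

theorem gf_exists_C (G : ℝ → ℂ) (cG : Continuous G)
    (hGper : Function.Periodic G (2 * Real.pi)) (hne : ∀ s t, G s + G t ≠ 0) :
    ∃ C : ℝ, 0 ≤ C ∧ ∀ s t, (1 + ‖G s‖ ^ 2) * (1 + ‖G t‖ ^ 2) / ‖G s + G t‖ ^ 2 ≤ C := by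
  have hp := Real.two_pi_pos
  have hK : IsCompact (Icc 0 (2 * Real.pi) ×ˢ Icc 0 (2 * Real.pi) : Set (ℝ × ℝ)) :=
    isCompact_Icc.prod isCompact_Icc
  have hcont : Continuous fun p : ℝ × ℝ => (1 + ‖G p.1‖ ^ 2) * (1 + ‖G p.2‖ ^ 2) /
      ‖G p.1 + G p.2‖ ^ 2 := by
    apply Continuous.div (by fun_prop) (by fun_prop)
    intro p
    exact pow_ne_zero _ (norm_ne_zero_iff.mpr (hne _ _))
  obtain ⟨C, hC⟩ := hK.exists_bound_of_continuousOn hcont.continuousOn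
  have hC' : ∀ s ∈ Icc 0 (2 * Real.pi), ∀ t ∈ Icc 0 (2 * Real.pi),
      (1 + ‖G s‖ ^ 2) * (1 + ‖G t‖ ^ 2) / ‖G s + G t‖ ^ 2 ≤ C := by
    intro s hs t ht
    have h1 := hC (s, t) (mk_mem_prod hs ht)
    exact (le_abs_self _).trans h1
  have hmod : ∀ s, ∃ s' ∈ Icc 0 (2 * Real.pi), G s = G s' := fun s => by
    obtain ⟨y, hy, hys⟩ := Function.Periodic.exists_mem_Ico₀ hGper hp s
    exact ⟨y, Ico_subset_Icc_self hy, hys⟩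
  refine ⟨max C 0, le_max_right _ _, ?_⟩
  intro s t
  obtain ⟨s', hs', e1⟩ := hmod s
  obtain ⟨t', ht', e2⟩ := hmod t
  rw [e1, e2]
  exact (hC' s' hs' t' ht').trans (le_max_left _ _)

theorem cont_shift {F : ℝ → ℝ → ℝ} (cF : Continuous (Function.uncurry F)) :
    Continuous (Function.uncurry (fun α t => F (t + α) t)) :=
  cF.comp (by fun_prop : Continuous fun p : ℝ × ℝ => (p.2 + p.1, p.2))

theorem II_shift (F : ℝ → ℝ → ℝ) (cF : Continuous (Function.uncurry F))
    (hper : ∀ t, Function.Periodic (fun s => F s t) (2 * Real.pi)) :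
    II F = II (fun α t => F (t + α) t) := by
  have cF' : Continuous (Function.uncurry (fun α t => F (t + α) t)) :=
    cF.comp (by fun_prop : Continuous fun p : ℝ × ℝ => (p.2 + p.1, p.2))
  rw [II_swap cF, II_swap cF']
  have key : ∀ t, ∫ s in (0:ℝ)..(2 * Real.pi), F s t =
      ∫ s in (0:ℝ)..(2 * Real.pi), F (t + s) t := by
    intro t
    have h1 := (hper t).intervalIntegral_add_eq 0 t
    rw [zero_add] at h1
    have h2 := intervalIntegral.integral_comp_add_left (a := 0) (b := 2 * Real.pi)
      (fun s => F s t) t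
    rw [add_zero] at h2
    exact h1.trans h2.symm
  unfold II
  simp only [key]

theorem gf_pt {X Y η C : ℝ} (hX : 0 < X) (hY : 0 < Y) (hη : 0 < η) (hC : Y / X ^ 2 ≤ C) :
    Real.log (X ^ 2 + η * Y) ≤ 2 * Real.log X + η * C := by
  have e : X ^ 2 + η * Y = X ^ 2 * (1 + η * (Y / X ^ 2)) := by field_simp
  rw [e, Real.log_mul (by positivity) (by positivity), Real.log_pow]
  have h2 := Real.log_le_sub_one_of_pos (x := 1 + η * (Y / X ^ 2)) (by positivity)
  have h3 := mul_le_mul_of_nonneg_left hC hη.le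
  push_cast
  linarith

theorem gf_upper (G : ℝ → ℂ) (cG : Continuous G) (hne : ∀ s t, G s + G t ≠ 0) {C V : ℝ}
    (hC : ∀ s t, (1 + ‖G s‖ ^ 2) * (1 + ‖G t‖ ^ 2) / ‖G s + G t‖ ^ 2 ≤ C)
    (hPval : II (fun s t => Real.log ‖G s + G t‖) = V) {η : ℝ} (hη : 0 < η) :
    II (fun s t => Real.log (‖G s + G t‖ ^ 2 + η * ((1 + ‖G s‖ ^ 2) * (1 + ‖G t‖ ^ 2)))) ≤
      2 * V + (2 * Real.pi) ^ 2 * (η * C) := by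
  have cP : Continuous (Function.uncurry fun s t => Real.log ‖G s + G t‖) := by
    show Continuous fun p : ℝ × ℝ => Real.log ‖G p.1 + G p.2‖
    apply Continuous.log (by fun_prop)
    intro p
    exact norm_ne_zero_iff.mpr (hne _ _)
  have h1 : II (fun s t => Real.log (‖G s + G t‖ ^ 2 +
      η * ((1 + ‖G s‖ ^ 2) * (1 + ‖G t‖ ^ 2)))) ≤
      II (fun s t => 2 * Real.log ‖G s + G t‖ + η * C) := by
    apply II_mono
    · show Continuous fun p : ℝ × ℝ => Real.log (‖G p.1 + G p.2‖ ^ 2 +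
        η * ((1 + ‖G p.1‖ ^ 2) * (1 + ‖G p.2‖ ^ 2)))
      apply Continuous.log (by fun_prop)
      intro p
      positivity
    · exact (continuous_const.mul cP).add continuous_const
    · intro s t
      have hX : 0 < ‖G s + G t‖ := norm_pos_iff.mpr (hne _ _)
      have hY : 0 < (1 + ‖G s‖ ^ 2) * (1 + ‖G t‖ ^ 2) := by positivity
      exact gf_pt hX hY hη (hC s t)
  rw [II_add (F := fun s t => 2 * Real.log ‖G s + G t‖) (G := fun _ _ => η * C)
    (continuous_const.mul cP) continuous_const, II_mul, II_const, hPval] at h1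
  exact h1

theorem gf_inner {g : ℂ → ℂ} (hg : DifferentiableOn ℂ g (ball 0 1)) {r : ℝ} (hr : 0 < r)
    (hr1 : r < 1) (hD : deriv g 0 ≠ 0) {η : ℝ} (hη : 0 < η) (α : ℝ)
    (hα : α ∈ Ioo 0 (2 * Real.pi)) :
    2 * Real.pi * (2 * (Real.log (r * ‖deriv g 0‖) + Real.log ‖circleMap 0 1 α - 1‖)) ≤
    ∫ t in (0:ℝ)..(2 * Real.pi),
      Real.log (‖g (circleMap 0 r (t + α)) - g (circleMap 0 r t)‖ ^ 2 + η) := by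
  have hp := Real.two_pi_pos
  have hrabs : |r| = r := abs_of_pos hr
  have hcb : closedBall (0:ℂ) |r| ⊆ ball 0 1 := by
    rw [hrabs]; exact closedBall_subset_ball hr1
  have h0b : (0:ℂ) ∈ ball (0:ℂ) 1 := by simp
  set u : ℂ := circleMap 0 1 α with hu
  have hun : ‖u‖ = 1 := by rw [hu, norm_circleMap_zero, abs_one]
  have hu1 : u - 1 ≠ 0 := by
    intro h
    have h1 : Complex.exp (α * Complex.I) = 1 := by
      have : u = 1 := by linear_combination h
      rw [hu, circleMap] at this
      simpa using this
    rw [Complex.exp_eq_one_iff] at h1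
    obtain ⟨n, hn⟩ := h1
    have h2 : (α : ℂ) = n * (2 * Real.pi) := by
      have hI := Complex.I_ne_zero
      apply mul_right_cancel₀ hI
      rw [hn]; ring
    have h3 : α = n * (2 * Real.pi) := by exact_mod_cast h2
    rw [h3] at hα
    have h4 : (0:ℝ) < n := pos_of_mul_pos_left hα.1 hp.le
    have h5 : (n:ℝ) < 1 := by
      by_contra hc
      push Not at hc
      nlinarith [hα.2]
    have h6 : (0:ℤ) < n := by exact_mod_cast h4
    have h7 : n < 1 := by exact_mod_cast h5
    omega
  have hub : ∀ z ∈ ball (0:ℂ) 1, u * z ∈ ball (0:ℂ) 1 := fun z hz => by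
    rw [mem_ball_zero_iff] at hz ⊢
    rw [norm_mul, hun, one_mul]; exact hz
  set q : ℂ → ℂ := fun z => g (u * z) - g z with hq
  have hqd : DifferentiableOn ℂ q (ball 0 1) := by
    apply DifferentiableOn.sub _ hg
    exact hg.comp (by fun_prop) hub
  have hqder : deriv q 0 = (u - 1) * deriv g 0 := by
    have h1 : HasDerivAt g (deriv g 0) 0 :=
      (hg.differentiableAt (isOpen_ball.mem_nhds h0b)).hasDerivAt
    have h2 : HasDerivAt (fun z => g (u * z)) (deriv g 0 * u) 0 := by
      have h3 : HasDerivAt g (deriv g 0) (u * 0) := by rw [mul_zero]; exact h1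
      have h4 : HasDerivAt (fun z : ℂ => u * z) u 0 := by
        simpa using (hasDerivAt_id (0:ℂ)).const_mul u
      exact h3.comp (0:ℂ) h4
    have h5 : HasDerivAt q (deriv g 0 * u - deriv g 0) 0 := h2.sub h1
    rw [h5.deriv]; ring
  set h : ℂ → ℂ := fun z => r * dslope q 0 z with hh
  have hhd : DifferentiableOn ℂ h (ball 0 1) :=
    ((Complex.differentiableOn_dslope (isOpen_ball.mem_nhds h0b)).mpr hqd).const_mul _
  have hh0 : h 0 = r * ((u - 1) * deriv g 0) := by simp only [hh, dslope_same, hqder]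
  have hrC : (r : ℂ) ≠ 0 := by exact_mod_cast hr.ne'
  have h00 : h 0 ≠ 0 := by
    rw [hh0]; exact mul_ne_zero hrC (mul_ne_zero hu1 hD)
  have key := avg_reg_ge hr ((hhd.analyticOnNhd isOpen_ball).mono hcb) h00 hη
  have hnorm : ∀ t, ‖h (circleMap 0 r t)‖ = ‖g (circleMap 0 r (t + α)) - g (circleMap 0 r t)‖ := by
    intro t
    have hz0 : circleMap 0 r t ≠ 0 := circleMap_ne_center hr.ne'
    have e1 : g (circleMap 0 r (t + α)) = g (u * circleMap 0 r t) := by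
      simp only [hu, circleMap]
      congr 1
      push_cast
      rw [add_mul, Complex.exp_add]; ring
    simp only [hh]
    rw [dslope_of_ne _ hz0, slope_def_field, e1, norm_mul, norm_div]
    simp only [hq, sub_zero, mul_zero, sub_self, norm_circleMap_zero, Complex.norm_real,
      Real.norm_eq_abs]
    rw [hrabs]
    field_simp
  rw [Real.circleAverage_def, smul_eq_mul] at key
  simp only [hnorm] at key
  have e2 : Real.log ‖h 0‖ = Real.log (r * ‖deriv g 0‖) + Real.log ‖u - 1‖ := by
    rw [hh0, norm_mul, norm_mul, ← Real.log_mul]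
    · congr 1
      rw [Complex.norm_real, Real.norm_eq_abs, hrabs]; ring
    · exact (mul_pos hr (norm_pos_iff.mpr hD)).ne'
    · exact norm_ne_zero_iff.mpr hu1
  rw [e2] at key
  rw [← le_inv_mul_iff₀ hp]
  exact key

theorem gf_low {g : ℂ → ℂ} (hg : DifferentiableOn ℂ g (ball 0 1)) {r : ℝ} (hr : 0 < r)
    (hr1 : r < 1) (hD : deriv g 0 ≠ 0) {η : ℝ} (hη : 0 < η)
    (cG : Continuous fun t => g (circleMap 0 r t)) :
    (2 * Real.pi) ^ 2 * (2 * Real.log (r * ‖deriv g 0‖)) ≤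
      II (fun s t => Real.log (‖g (circleMap 0 r s) - g (circleMap 0 r t)‖ ^ 2 + η)) := by
  have hp := Real.two_pi_pos
  have hcont : ∀ G : ℝ → ℂ, Continuous G →
      Continuous (Function.uncurry fun s t => Real.log (‖G s - G t‖ ^ 2 + η)) := by
    intro G hG
    show Continuous fun p : ℝ × ℝ => Real.log (‖G p.1 - G p.2‖ ^ 2 + η)
    apply Continuous.log (by fun_prop)
    intro p
    positivity
  have cF := hcont _ cG
  have cF' : Continuous (Function.uncurry fun α t => Real.log (‖g (circleMap 0 r (t + α)) -
      g (circleMap 0 r t)‖ ^ 2 + η)) :=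
    cont_shift cF
  rw [II_shift _ cF (fun t s => by simp only [periodic_circleMap 0 r s])]
  have hinner := gf_inner hg hr hr1 hD hη
  have hcint : IntervalIntegrable (fun α => Real.log ‖circleMap 0 1 α - 1‖) volume 0
      (2 * Real.pi) := by
    have : CircleIntegrable (fun z : ℂ => Real.log ‖z - 1‖) 0 1 :=
      MeromorphicOn.circleIntegrable_log_norm fun z _ => by fun_prop
    exact this
  have hcz : ∫ α in (0:ℝ)..(2 * Real.pi), Real.log ‖circleMap 0 1 α - 1‖ = 0 := by
    have := circleAverage_log_norm_sub_const₁ (a := 1) (by simp)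
    rw [Real.circleAverage_def, smul_eq_mul, inv_mul_eq_iff_eq_mul₀ hp.ne', mul_zero] at this
    exact this
  have hlast := intervalIntegral.integral_mono_on_of_le_Ioo hp.le
    (((intervalIntegrable_const (c := Real.log (r * ‖deriv g 0‖))).add hcint).const_mul 2
      |>.const_mul (2 * Real.pi)) ((II_inner_cont cF').intervalIntegrable _ _) hinner
  rw [intervalIntegral.integral_const_mul, intervalIntegral.integral_const_mul,
    intervalIntegral.integral_add intervalIntegrable_const hcint, hcz,
    intervalIntegral.integral_const, smul_eq_mul, sub_zero, add_zero] at hlast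
  refine le_trans (le_of_eq ?_) hlast
  ring
theorem gelfer_r {g : ℂ → ℂ} (hg : DifferentiableOn ℂ g (ball 0 1))
    (hne : ∀ z ∈ ball (0:ℂ) 1, ∀ w ∈ ball (0:ℂ) 1, g z + g w ≠ 0) {r : ℝ} (hr : 0 < r)
    (hr1 : r < 1) (hD : deriv g 0 ≠ 0) : r * ‖deriv g 0‖ ≤ 2 * ‖g 0‖ := by
  have hp := Real.two_pi_pos
  have hrabs : |r| = r := abs_of_pos hr
  have hcb : closedBall (0:ℂ) |r| ⊆ ball 0 1 := by
    rw [hrabs]; exact closedBall_subset_ball hr1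
  have han : AnalyticOnNhd ℂ g (ball 0 1) := hg.analyticOnNhd isOpen_ball
  have h0b : (0:ℂ) ∈ ball (0:ℂ) 1 := by simp
  have hcm : ∀ t, circleMap 0 r t ∈ ball (0:ℂ) 1 := fun t =>
    hcb (sphere_subset_closedBall (by rw [hrabs]; exact circleMap_mem_sphere 0 hr.le t))
  obtain ⟨G, hGdef⟩ : ∃ G : ℝ → ℂ, G = fun t => g (circleMap 0 r t) := ⟨_, rfl⟩
  have cG : Continuous G := by
    have h1 : ContinuousOn g (ball 0 1) := hg.continuousOn
    rw [hGdef]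
    exact h1.comp_continuous (continuous_circleMap 0 r) hcm
  have hGper : ∀ t, G (t + 2 * Real.pi) = G t := fun t => by
    simp only [hGdef, periodic_circleMap 0 r t]
  have hneG : ∀ s t, G s + G t ≠ 0 := fun s t => by
    rw [hGdef]; exact hne _ (hcm s) _ (hcm t)
  have hPval : II (fun s t => Real.log ‖G s + G t‖) = (2 * Real.pi) ^ 2 * Real.log (2 * ‖g 0‖) := by
    have avg : ∀ c ∈ ball (0:ℂ) 1, ∫ t in (0:ℝ)..(2 * Real.pi), Real.log ‖g c + G t‖ =
        2 * Real.pi * Real.log ‖g c + g 0‖ := by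
      intro c hc
      have := AnalyticOnNhd.circleAverage_log_norm_of_ne_zero (R := r) (c := 0)
        (g := fun z => g c + g z) (fun z hz => analyticAt_const.add (han z (hcb hz)))
        (fun z hz => hne _ hc _ (hcb hz))
      rw [Real.circleAverage_def, smul_eq_mul, inv_mul_eq_iff_eq_mul₀ hp.ne'] at this
      simp only [hGdef]
      exact this
    have e1 : ∀ s, ∫ t in (0:ℝ)..(2 * Real.pi), Real.log ‖G s + G t‖ =
        2 * Real.pi * Real.log ‖g 0 + G s‖ := fun s => by
      rw [add_comm (g 0)]
      have := avg _ (hcm s)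
      rw [hGdef] at this ⊢
      exact this
    unfold II
    simp only [e1]
    rw [intervalIntegral.integral_const_mul, avg 0 h0b]
    have : ‖g 0 + g 0‖ = 2 * ‖g 0‖ := by rw [← two_mul, norm_mul]; simp
    rw [this]; ring
  obtain ⟨C, hC0, hC⟩ := gf_exists_C G cG hGper hneG
  have hlow : ∀ η > 0, (2 * Real.pi) ^ 2 * (2 * Real.log (r * ‖deriv g 0‖)) ≤
      II (fun s t => Real.log (‖G s - G t‖ ^ 2 + η)) := by
    intro η hη
    have := gf_low hg hr hr1 hD hη (by rw [hGdef] at cG; exact cG)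
    rw [hGdef]
    exact this
  have hall : ∀ η > 0, Real.log (r * ‖deriv g 0‖) ≤ Real.log (2 * ‖g 0‖) + η := by
    intro η' hη'
    set η : ℝ := 2 * η' / (C + 1) with hηd
    have hη : 0 < η := by positivity
    have h1 := hlow η hη
    have h2 := energy G cG hη
    have h3 := gf_upper G cG hneG hC hPval hη
    have h4 : II (fun s t => Real.log (‖G s - G t‖ ^ 2 + η)) ≤
        II (fun s t => Real.log (‖G s - G t‖ ^ 2 + η * ((1 + ‖G s‖ ^ 2) * (1 + ‖G t‖ ^ 2)))) := by
      apply II_mono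
      · show Continuous fun p : ℝ × ℝ => Real.log (‖G p.1 - G p.2‖ ^ 2 + η)
        apply Continuous.log (by fun_prop)
        intro p
        positivity
      · show Continuous fun p : ℝ × ℝ => Real.log (‖G p.1 - G p.2‖ ^ 2 +
          η * ((1 + ‖G p.1‖ ^ 2) * (1 + ‖G p.2‖ ^ 2)))
        apply Continuous.log (by fun_prop)
        intro p
        positivity
      · intro s t
        apply Real.log_le_log (by positivity)
        have : 1 ≤ (1 + ‖G s‖ ^ 2) * (1 + ‖G t‖ ^ 2) := by
          nlinarith [sq_nonneg ‖G s‖, sq_nonneg ‖G t‖, mul_nonneg (sq_nonneg ‖G s‖)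
            (sq_nonneg ‖G t‖)]
        nlinarith
    have h5 := (h1.trans h4).trans (h2.trans h3)
    have h6 : 2 * Real.log (r * ‖deriv g 0‖) ≤ 2 * Real.log (2 * ‖g 0‖) + η * C := by
      refine le_of_mul_le_mul_left (h5.trans (le_of_eq ?_)) (show 0 < (2 * Real.pi) ^ 2 by positivity)
      ring
    have h7 : η * C ≤ 2 * η' := by
      rw [hηd, div_mul_eq_mul_div, div_le_iff₀ (by positivity)]
      nlinarith
    linarith
  have hfin := le_of_forall_pos_le_add hall
  have hg0 : 0 < ‖g 0‖ := norm_pos_iff.mpr fun h => hne 0 h0b 0 h0b (by rw [h, add_zero])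
  exact (Real.log_le_log_iff (mul_pos hr (norm_pos_iff.mpr hD)) (by positivity)).mp hfin

theorem gelfer {g : ℂ → ℂ} (hg : DifferentiableOn ℂ g (ball 0 1))
    (hne : ∀ z ∈ ball (0:ℂ) 1, ∀ w ∈ ball (0:ℂ) 1, g z + g w ≠ 0) :
    ‖deriv g 0‖ ≤ 2 * ‖g 0‖ := by
  by_cases hD : deriv g 0 = 0
  · rw [hD, norm_zero]; positivity
  have h1 : Tendsto (fun r : ℝ => r * ‖deriv g 0‖) (𝓝[<] 1) (𝓝 (1 * ‖deriv g 0‖)) :=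
    tendsto_nhdsWithin_of_tendsto_nhds ((continuous_id.mul continuous_const).tendsto 1)
  rw [one_mul] at h1
  apply le_of_tendsto h1
  filter_upwards [Ioo_mem_nhdsLT (show (0:ℝ) < 1 by norm_num)] with r hr
  exact gelfer_r hg hne hr.1 hr.2 hD

theorem sqrt_hasDerivAt {g h : ℂ → ℂ} {z : ℂ} {h' : ℂ} (hg : ContinuousAt g z)
    (hgh : ∀ᶠ w in 𝓝 z, g w ^ 2 = h w) (h0 : g z ≠ 0) (hh : HasDerivAt h h' z) :
    HasDerivAt g (h' / (g z + g z)) z := by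
  rw [hasDerivAt_iff_tendsto_slope] at hh ⊢
  have hs : g z + g z ≠ 0 := by
    rw [← two_mul]; exact mul_ne_zero two_ne_zero h0
  have hc : Tendsto (fun w => g w + g z) (𝓝[≠] z) (𝓝 (g z + g z)) :=
    (hg.tendsto.mono_left nhdsWithin_le_nhds).add tendsto_const_nhds
  refine (hh.div hc hs).congr' ?_
  have hz : g z ^ 2 = h z := hgh.self_of_nhds
  filter_upwards [hgh.filter_mono nhdsWithin_le_nhds, hc.eventually_ne hs] with w hw hne
  rw [Pi.div_apply, slope_def_field, slope_def_field, ← hw, ← hz, div_eq_iff hne]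
  ring

theorem functional_deriv {n : ℕ} {Ω : Set (EuclideanSpace ℂ (Fin n))} (hG : GoodC Ω)
    (ξ : EuclideanSpace ℂ (Fin n)) (A : EuclideanSpace ℂ (Fin n) →L[ℂ] ℂ)
    (hA : ∀ x ∈ Ω, A (x - ξ) ≠ 0) {f : ℂ → EuclideanSpace ℂ (Fin n)}
    (hf : DifferentiableOn ℂ f (ball 0 1)) (hm : MapsTo f (ball 0 1) Ω) :
    ‖A (deriv f 0)‖ ≤ 4 * ‖A (f 0 - ξ)‖ := by
  have hG' := goodC_translate hG ξ
  obtain ⟨lam, hlc, hle⟩ := global_log hG' A (by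
    intro x hx
    have := hA _ hx
    rwa [add_sub_cancel_right] at this)
  have hm' : ∀ z ∈ ball (0:ℂ) 1, f z - ξ ∈ {x | x + ξ ∈ Ω} := fun z hz => by
    simpa using hm hz
  have hlam : ∀ x ∈ {x | x + ξ ∈ Ω}, ∀ y ∈ {x | x + ξ ∈ Ω}, A x = A y → lam y = lam x := by
    intro x hx y hy hxy
    have := slice_const hG' hx hy (S := {z | z + ξ ∈ Ω ∧ A z = A x}) (f := lam)
      (g := fun _ => 0) (c := A x) ?_ ?_ ?_ ?_
    · simpa using this
    · intro ζ hζ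
      exact ⟨hζ, by simp [hxy]⟩
    · exact hlc.mono fun z hz => hz.1
    · exact continuousOn_const
    · intro z hz
      rw [hle z hz.1, hz.2]; simp
  set g : ℂ → ℂ := fun z => Complex.exp (lam (f z - ξ) / 2) with hg
  have hg0 : ∀ z, g z ≠ 0 := fun z => Complex.exp_ne_zero _
  have hsq : ∀ z ∈ ball (0:ℂ) 1, g z ^ 2 = A (f z - ξ) := by
    intro z hz
    rw [← hle _ (hm' z hz), hg, ← Complex.exp_nat_mul]
    congr 1
    push_cast; ring
  have hgc : ContinuousOn g (ball 0 1) := by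
    have h1 : ContinuousOn (fun z => lam (f z - ξ)) (ball 0 1) :=
      hlc.comp (hf.continuousOn.sub continuousOn_const) hm'
    exact Complex.continuous_exp.comp_continuousOn (h1.div_const 2)
  have hd : ∀ z ∈ ball (0:ℂ) 1, HasDerivAt g (A (deriv f z) / (g z + g z)) z := by
    intro z hz
    have hn := isOpen_ball.mem_nhds hz
    have h1 := ((hf.differentiableAt hn).hasDerivAt.sub_const ξ)
    have h2 : HasDerivAt (fun w => A (f w - ξ)) (A (deriv f z)) z :=
      A.hasFDerivAt.comp_hasDerivAt z h1
    exact sqrt_hasDerivAt (hgc.continuousAt hn) (by filter_upwards [hn] with w hw using hsq w hw)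
      (hg0 z) h2
  have hne : ∀ z ∈ ball (0:ℂ) 1, ∀ w ∈ ball (0:ℂ) 1, g z + g w ≠ 0 := by
    intro z hz w hw h
    have h1 : g z = - g w := eq_neg_of_add_eq_zero_left h
    have h2 : A (f z - ξ) = A (f w - ξ) := by rw [← hsq z hz, ← hsq w hw, h1, neg_sq]
    have h3 := hlam _ (hm' z hz) _ (hm' w hw) h2
    have h4 : g w = g z := by simp only [hg, h3]
    rw [h4, ← two_mul] at h
    exact mul_ne_zero two_ne_zero (hg0 z) h
  have h0b : (0:ℂ) ∈ ball (0:ℂ) 1 := by simp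
  have key := gelfer (fun z hz => (hd z hz).differentiableAt.differentiableWithinAt) hne
  rw [(hd 0 h0b).deriv, ← two_mul, norm_div, norm_mul, Complex.norm_ofNat] at key
  have hp : 0 < ‖g 0‖ := norm_pos_iff.mpr (hg0 0)
  rw [div_le_iff₀ (by positivity)] at key
  rw [← hsq 0 h0b, norm_pow]
  linarith

section
variable {E : Type*} [NormedAddCommGroup E] [NormedSpace ℂ E]

theorem derivWithin_ball0 (f : ℂ → E) : derivWithin f (ball (0:ℂ) 1) 0 = deriv f 0 :=
  derivWithin_of_mem_nhds (ball_mem_nhds 0 one_pos)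

theorem kobMetric_nonneg (D : Set E) (x v : E) : 0 ≤ kobMetric D x v := by
  apply Real.sInf_nonneg
  rintro r ⟨f, ξ, -, -, -, -, rfl⟩
  positivity

theorem kobSet_bdd (D : Set E) (x v : E) : BddBelow { r : ℝ | ∃ (f : ℂ → E) (ξ : ℂ),
    DifferentiableOn ℂ f (ball (0:ℂ) 1) ∧ MapsTo f (ball (0:ℂ) 1) D ∧
    f 0 = x ∧ ξ • derivWithin f (ball (0:ℂ) 1) 0 = v ∧ r = ‖ξ‖ } :=
  ⟨0, by rintro r ⟨f, ξ, -, -, -, -, rfl⟩; positivity⟩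

theorem kobSet_mem {D : Set E} {x : E} {ε : ℝ} (hε : 0 < ε) (hx : ball x ε ⊆ D) (v : E) :
    ‖v‖ / ε ∈ { r : ℝ | ∃ (f : ℂ → E) (ξ : ℂ),
    DifferentiableOn ℂ f (ball (0:ℂ) 1) ∧ MapsTo f (ball (0:ℂ) 1) D ∧
    f 0 = x ∧ ξ • derivWithin f (ball (0:ℂ) 1) 0 = v ∧ r = ‖ξ‖ } := by
  refine ⟨fun z => x + z • (((ε / ‖v‖ : ℝ) : ℂ) • v), ((‖v‖ / ε : ℝ) : ℂ), ?_, ?_, ?_, ?_, ?_⟩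
  · fun_prop
  · intro z hz
    apply hx
    rw [mem_ball_zero_iff] at hz
    rw [mem_ball, dist_eq_norm, add_sub_cancel_left, norm_smul, norm_smul, Complex.norm_real,
      norm_div, norm_norm, Real.norm_of_nonneg hε.le]
    by_cases hv : ‖v‖ = 0
    · simp [hv, hε]
    · rw [div_mul_cancel₀ _ hv]
      exact (mul_lt_mul_of_pos_right hz hε).trans_eq (one_mul _)
  · simp
  · rw [derivWithin_ball0]
    have : HasDerivAt (fun z : ℂ => x + z • (((ε / ‖v‖ : ℝ) : ℂ) • v))
        (((ε / ‖v‖ : ℝ) : ℂ) • v) 0 := by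
      simpa using ((hasDerivAt_id (0:ℂ)).smul_const (((ε / ‖v‖ : ℝ) : ℂ) • v)).const_add x
    rw [this.deriv, smul_smul, ← Complex.ofReal_mul]
    by_cases hv : v = 0
    · simp [hv]
    · have : ‖v‖ / ε * (ε / ‖v‖) = 1 := by
        have := norm_ne_zero_iff.mpr hv
        field_simp
      rw [this]; simp
  · rw [Complex.norm_real, Real.norm_of_nonneg (by positivity)]

theorem kobMetric_le {D : Set E} {x : E} {ε : ℝ} (hε : 0 < ε) (hx : ball x ε ⊆ D) (v : E) :
    kobMetric D x v ≤ ‖v‖ / ε :=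
  csInf_le (kobSet_bdd D x v) (kobSet_mem hε hx v)

end

theorem kobMetric_ge {n : ℕ} {Ω : Set (EuclideanSpace ℂ (Fin n))} (hG : GoodC Ω)
    (ξ : EuclideanSpace ℂ (Fin n)) (A : EuclideanSpace ℂ (Fin n) →L[ℂ] ℂ)
    (hA : ∀ x ∈ Ω, A (x - ξ) ≠ 0) {x : EuclideanSpace ℂ (Fin n)} (hx : x ∈ Ω)
    (v : EuclideanSpace ℂ (Fin n)) :
    ‖A v‖ / (4 * ‖A (x - ξ)‖) ≤ kobMetric Ω x v := by
  obtain ⟨ε, hε, hb⟩ := Metric.isOpen_iff.mp hG.isOpen x hx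
  apply le_csInf ⟨_, kobSet_mem hε hb v⟩
  rintro r ⟨f, ζ, hf, hm, h0, hd, rfl⟩
  have hp : 0 < ‖A (x - ξ)‖ := norm_pos_iff.mpr (hA x hx)
  rw [div_le_iff₀ (by positivity), ← hd, derivWithin_ball0, map_smul, norm_smul]
  have := functional_deriv hG ξ A hA hf hm
  rw [h0] at this
  exact mul_le_mul_of_nonneg_left this (norm_nonneg _)

section
variable {E : Type*} [NormedAddCommGroup E] [NormedSpace ℂ E]

theorem kob_usc_aux {D : Set E} (hD : IsOpen D) {x v : E} (hx : x ∈ D) {c : ℝ}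
    (hc : kobMetric D x v < c) : ∃ (F : ℂ → E) (η : ℂ) (δ : ℝ), 0 < δ ∧ η ≠ 0 ∧ ‖η‖ < c ∧
      DifferentiableOn ℂ F (ball 0 1) ∧ (∀ z ∈ ball (0:ℂ) 1, ball (F z) δ ⊆ D) ∧
      F 0 = x ∧ η • deriv F 0 = v := by
  obtain ⟨ε, hε, hb⟩ := Metric.isOpen_iff.mp hD x hx
  obtain ⟨r', ⟨f, ξ, hf, hm, h0, hd, rfl⟩, hlt⟩ :=
    exists_lt_of_csInf_lt ⟨_, kobSet_mem hε hb v⟩ hc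
  rw [derivWithin_ball0] at hd
  by_cases hξ : ξ = 0
  · have hc0 : 0 < c := (norm_nonneg ξ).trans_lt hlt
    have hv : v = 0 := by rw [← hd, hξ, zero_smul]
    refine ⟨fun _ => x, ((c / 2 : ℝ) : ℂ), ε, hε, ?_, ?_, by fun_prop, fun _ _ => hb, rfl, ?_⟩
    · exact_mod_cast (half_pos hc0).ne'
    · rw [Complex.norm_real, Real.norm_of_nonneg (half_pos hc0).le]; linarith
    · simp [hv]
  · have hn : 0 < ‖ξ‖ := norm_pos_iff.mpr hξ
    have hc0 : 0 < c := hn.trans hlt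
    obtain ⟨r, hr1, hr2⟩ := exists_between ((div_lt_one hc0).mpr hlt)
    have hr0 : 0 < r := (by positivity : 0 < ‖ξ‖ / c).trans hr1
    have hrC : (r : ℂ) ≠ 0 := by exact_mod_cast hr0.ne'
    have hmap : ∀ z ∈ closedBall (0:ℂ) 1, (r : ℂ) * z ∈ ball (0:ℂ) 1 := by
      intro z hz
      rw [mem_closedBall_zero_iff] at hz
      rw [mem_ball_zero_iff, norm_mul, Complex.norm_real, Real.norm_of_nonneg hr0.le]
      nlinarith
    have hcF : ContinuousOn (fun z : ℂ => f (r * z)) (closedBall 0 1) :=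
      hf.continuousOn.comp (by fun_prop) hmap
    have hK : IsCompact ((fun z : ℂ => f (r * z)) '' closedBall 0 1) :=
      (isCompact_closedBall _ _).image_of_continuousOn hcF
    obtain ⟨δ, hδ, hsub⟩ := hK.exists_thickening_subset_open hD (by
      rintro _ ⟨z, hz, rfl⟩
      exact hm (hmap z hz))
    refine ⟨fun z => f (r * z), ξ / r, δ, hδ, div_ne_zero hξ hrC, ?_, ?_, ?_, by simp [h0], ?_⟩
    · rw [norm_div, Complex.norm_real, Real.norm_of_nonneg hr0.le, div_lt_iff₀ hr0]
      rw [div_lt_iff₀ hc0] at hr1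
      linarith
    · exact hf.comp (by fun_prop) fun z hz => hmap z (ball_subset_closedBall hz)
    · intro z hz
      exact (ball_subset_thickening (mem_image_of_mem _ (ball_subset_closedBall hz)) δ).trans hsub
    · have h1 : HasDerivAt f (deriv f 0) ((r:ℂ) * 0) := by
        rw [mul_zero]
        exact (hf.differentiableAt (ball_mem_nhds 0 one_pos)).hasDerivAt
      have h2 : HasDerivAt (fun z : ℂ => (r:ℂ) * z) r 0 := by
        simpa using (hasDerivAt_id (0:ℂ)).const_mul (r:ℂ)
      have h3 : HasDerivAt (fun z : ℂ => f (r * z)) ((r:ℂ) • deriv f 0) 0 := h1.scomp 0 h2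
      rw [h3.deriv, smul_smul, div_mul_cancel₀ _ hrC, hd]

theorem kob_usc {D : Set E} (hD : IsOpen D) (c : ℝ) :
    IsOpen {p : E × E | p.1 ∈ D ∧ kobMetric D p.1 p.2 < c} := by
  rw [isOpen_iff_mem_nhds]
  rintro ⟨x, v⟩ ⟨hx, hc⟩
  obtain ⟨F, η, δ, hδ, hη, hηc, hF, hFD, hF0, hFd⟩ := kob_usc_aux hD hx hc
  have hcont : Continuous fun p : E × E => ‖p.1 - x‖ + ‖η⁻¹ • (p.2 - v)‖ := by fun_prop
  have hev : ∀ᶠ p : E × E in 𝓝 (x, v), ‖p.1 - x‖ + ‖η⁻¹ • (p.2 - v)‖ < δ := by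
    apply hcont.continuousAt.eventually_lt continuousAt_const
    simpa using hδ
  filter_upwards [hev] with p hp
  have hmaps : ∀ z ∈ ball (0:ℂ) 1, F z + (p.1 - x) + z • (η⁻¹ • (p.2 - v)) ∈ D := by
    intro z hz
    apply hFD z hz
    rw [mem_ball_zero_iff] at hz
    rw [mem_ball, dist_eq_norm, add_assoc, add_sub_cancel_left]
    refine lt_of_le_of_lt (norm_add_le _ _) (lt_of_le_of_lt ?_ hp)
    rw [norm_smul z]
    have := norm_nonneg (η⁻¹ • (p.2 - v))
    nlinarith
  have h0 : F 0 + (p.1 - x) + (0:ℂ) • (η⁻¹ • (p.2 - v)) = p.1 := by rw [hF0]; simp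
  refine ⟨h0 ▸ hmaps 0 (by simp), lt_of_le_of_lt (csInf_le (kobSet_bdd _ _ _)
    ⟨fun z => F z + (p.1 - x) + z • (η⁻¹ • (p.2 - v)), η, ?_, hmaps, h0, ?_, rfl⟩) hηc⟩
  · exact (hF.add_const _).add (by fun_prop)
  · rw [derivWithin_ball0]
    have h1 : HasDerivAt F (deriv F 0) 0 :=
      (hF.differentiableAt (ball_mem_nhds 0 one_pos)).hasDerivAt
    have h2 : HasDerivAt (fun z : ℂ => z • (η⁻¹ • (p.2 - v))) (η⁻¹ • (p.2 - v)) 0 := by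
      simpa using (hasDerivAt_id (0:ℂ)).smul_const (η⁻¹ • (p.2 - v))
    have h3 : HasDerivAt (fun z => F z + (p.1 - x) + z • (η⁻¹ • (p.2 - v)))
        (deriv F 0 + η⁻¹ • (p.2 - v)) 0 := (h1.add_const _).add h2
    rw [h3.deriv, smul_add, hFd, smul_inv_smul₀ hη]
    abel
end

theorem AC_cont {n : ℕ} {σ g : ℝ → EuclideanSpace ℂ (Fin n)} {a b : ℝ} (hab : a ≤ b)
    (h : IsACWithDeriv σ g a b) : ContinuousOn σ (Icc a b) := by
  have h1 : ContinuousOn (fun t => ∫ s in a..t, g s) (Icc a b) := by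
    have := intervalIntegral.continuousOn_primitive_interval' h.1 left_mem_uIcc
    rwa [uIcc_of_le hab] at this
  exact (continuousOn_const.add h1).congr fun t ht => h.2 t ht

theorem kob_integrable {n : ℕ} {Ω : Set (EuclideanSpace ℂ (Fin n))} (hD : IsOpen Ω)
    {σ g : ℝ → EuclideanSpace ℂ (Fin n)} {a b : ℝ} (hab : a ≤ b)
    (h : IsACWithDeriv σ g a b) (hm : MapsTo σ (Icc a b) Ω) :
    IntervalIntegrable (fun t => kobMetric Ω (σ t) (g t)) volume a b := by
  classical
  have hσ := AC_cont hab h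
  have hK : IsCompact (σ '' Icc a b) := isCompact_Icc.image_of_continuousOn hσ
  obtain ⟨δ, hδ, hsub⟩ := hK.exists_thickening_subset_open hD (by
    rintro _ ⟨t, ht, rfl⟩; exact hm ht)
  have hle : ∀ t ∈ Icc a b, kobMetric Ω (σ t) (g t) ≤ ‖g t‖ / δ := fun t ht =>
    kobMetric_le hδ ((ball_subset_thickening (mem_image_of_mem _ ht) δ).trans hsub) _
  set φ : EuclideanSpace ℂ (Fin n) × EuclideanSpace ℂ (Fin n) → ℝ :=
    fun p => if p.1 ∈ Ω then kobMetric Ω p.1 p.2 else 0 with hφ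
  have hφm : Measurable φ := by
    apply measurable_of_Iio
    intro c
    have hΩm : MeasurableSet {p : EuclideanSpace ℂ (Fin n) × EuclideanSpace ℂ (Fin n) | p.1 ∈ Ω} :=
      (hD.preimage continuous_fst).measurableSet
    have : φ ⁻¹' Iio c = {p | p.1 ∈ Ω ∧ kobMetric Ω p.1 p.2 < c} ∪
        ({p | p.1 ∈ Ω}ᶜ ∩ {_p | 0 < c}) := by
      ext p
      by_cases hp : p.1 ∈ Ω <;> simp [hφ, hp]
    rw [this]
    exact (kob_usc hD c).measurableSet.union (hΩm.compl.inter (MeasurableSet.const _))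
  have hgi := h.1
  rw [intervalIntegrable_iff_integrableOn_Ioc_of_le hab] at hgi ⊢
  have hσm : AEMeasurable σ (volume.restrict (Ioc a b)) :=
    (hσ.mono Ioc_subset_Icc_self).aemeasurable measurableSet_Ioc
  have hgm : AEMeasurable g (volume.restrict (Ioc a b)) := hgi.aestronglyMeasurable.aemeasurable
  have hcomp : AEMeasurable (fun t => φ (σ t, g t)) (volume.restrict (Ioc a b)) :=
    hφm.comp_aemeasurable (hσm.prodMk hgm)
  have heq : (fun t => φ (σ t, g t)) =ᵐ[volume.restrict (Ioc a b)]
      fun t => kobMetric Ω (σ t) (g t) := by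
    filter_upwards [ae_restrict_mem measurableSet_Ioc] with t ht
    simp [hφ, hm (Ioc_subset_Icc_self ht)]
  refine Integrable.mono' (hgi.norm.div_const δ) (hcomp.congr heq).aestronglyMeasurable ?_
  filter_upwards [ae_restrict_mem measurableSet_Ioc] with t ht
  rw [Real.norm_of_nonneg (kobMetric_nonneg _ _ _)]
  exact hle t (Ioc_subset_Icc_self ht)

theorem AC_log {u : ℝ → ℝ} {a b D : ℝ} (hD : 0 < D) (hu : AbsolutelyContinuousOnInterval u a b)
    (hDu : ∀ t ∈ uIcc a b, D ≤ u t) :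
    AbsolutelyContinuousOnInterval (fun t => Real.log (u t)) a b := by
  have hlip : ∀ x y : ℝ, D ≤ x → D ≤ y → Real.log x - Real.log y ≤ |x - y| / D := by
    intro x y hx hy
    have hx0 := hD.trans_le hx
    have hy0 := hD.trans_le hy
    rw [← Real.log_div hx0.ne' hy0.ne']
    have h1 := Real.log_le_sub_one_of_pos (div_pos hx0 hy0)
    have h2 : x / y - 1 = (x - y) / y := by field_simp
    rw [h2] at h1
    refine h1.trans ((div_le_div_of_nonneg_right (le_abs_self _) hy0.le).trans ?_)
    gcongr
  have h0 : Tendsto (fun E : ℕ × (ℕ → ℝ × ℝ) =>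
      D⁻¹ * ∑ i ∈ Finset.range E.1, dist (u (E.2 i).1) (u (E.2 i).2))
      (AbsolutelyContinuousOnInterval.totalLengthFilter ⊓
        𝓟 (AbsolutelyContinuousOnInterval.disjWithin a b)) (𝓝 0) := by
    simpa using Tendsto.const_mul D⁻¹ hu
  refine squeeze_zero' ?_ ?_ h0
  · filter_upwards with E
    exact Finset.sum_nonneg (fun _ _ ↦ dist_nonneg)
  · have hmem : AbsolutelyContinuousOnInterval.disjWithin a b ∈
      (AbsolutelyContinuousOnInterval.totalLengthFilter ⊓
        𝓟 (AbsolutelyContinuousOnInterval.disjWithin a b)) :=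
      mem_inf_of_right (mem_principal_self _)
    filter_upwards [hmem] with E hE
    rw [Finset.mul_sum]
    apply Finset.sum_le_sum
    intro i hi
    obtain ⟨h1, h2⟩ := hE.1 i hi
    rw [Real.dist_eq, Real.dist_eq, inv_mul_eq_div, abs_le]
    have h3 := hlip _ _ (hDu _ h1) (hDu _ h2)
    have h4 := hlip _ _ (hDu _ h2) (hDu _ h1)
    rw [abs_sub_comm] at h4
    constructor <;> linarith

theorem log_int {φ : ℝ → ℝ} {a b c D ε : ℝ} (hφ : IntervalIntegrable φ volume a b)
    (hD : 0 < D) (hc : c ∈ uIcc a b)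
    (hu : ∀ t ∈ uIcc a b, D ≤ D + ε * ∫ s in c..t, φ s) :
    ∫ t in a..b, ε * φ t / (D + ε * ∫ s in c..t, φ s) =
      Real.log (D + ε * ∫ s in c..b, φ s) - Real.log (D + ε * ∫ s in c..a, φ s) := by
  have h1 := hφ.absolutelyContinuousOnInterval_intervalIntegral hc
  have hDc : AbsolutelyContinuousOnInterval (fun _ : ℝ => D) a b :=
    (LipschitzWith.const D).lipschitzOnWith.absolutelyContinuousOnInterval
  have h2 : AbsolutelyContinuousOnInterval (fun t => D + ε * ∫ s in c..t, φ s) a b :=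
    hDc.fun_add (h1.const_mul ε)
  have h3 := AC_log hD h2 hu
  rw [← h3.integral_deriv_eq_sub]
  apply intervalIntegral.integral_congr_ae
  filter_upwards [hφ.ae_hasDerivAt_integral] with t ht htm
  have htm' := uIoc_subset_uIcc htm
  have h4 := ((ht htm' c hc).const_mul ε).const_add D
  exact (h4.log (hD.trans_le (hu t htm')).ne').deriv.symm

theorem log_int_left {φ : ℝ → ℝ} {a b D : ℝ} (hab : a ≤ b) (hφ : IntervalIntegrable φ volume a b)
    (h0 : ∀ t, 0 ≤ φ t) (hD : 0 < D) :
    ∫ t in a..b, φ t / (D + ∫ s in a..t, φ s) =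
      Real.log (D + ∫ s in a..b, φ s) - Real.log D := by
  have := log_int (ε := 1) hφ hD left_mem_uIcc (by
    intro t ht
    rw [uIcc_of_le hab] at ht
    have := intervalIntegral.integral_nonneg (μ := volume) ht.1 (fun s _ => h0 s)
    linarith)
  simpa using this

theorem log_int_right {φ : ℝ → ℝ} {a b D : ℝ} (hab : a ≤ b)
    (hφ : IntervalIntegrable φ volume a b) (h0 : ∀ t, 0 ≤ φ t) (hD : 0 < D) :
    ∫ t in a..b, φ t / (D + ∫ s in t..b, φ s) =
      Real.log (D + ∫ s in a..b, φ s) - Real.log D := by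
  have := log_int (ε := -1) hφ hD right_mem_uIcc (by
    intro t ht
    rw [uIcc_of_le hab] at ht
    have := intervalIntegral.integral_nonneg (μ := volume) ht.2 (fun s _ => h0 s)
    rw [intervalIntegral.integral_symm]
    linarith)
  have e : ∀ t, (-1 : ℝ) * ∫ s in b..t, φ s = ∫ s in t..b, φ s := fun t => by
    rw [intervalIntegral.integral_symm]; ring
  simp only [e, intervalIntegral.integral_same, add_zero, neg_zero, neg_one_mul, neg_div,
    intervalIntegral.integral_neg] at this
  linarith

theorem length_ge {n : ℕ} {Ω : Set (EuclideanSpace ℂ (Fin n))} (hG : GoodC Ω)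
    (ξ : EuclideanSpace ℂ (Fin n)) (A : EuclideanSpace ℂ (Fin n) →L[ℂ] ℂ)
    (hA : ∀ x ∈ Ω, A (x - ξ) ≠ 0)
    {σ g : ℝ → EuclideanSpace ℂ (Fin n)} {a b : ℝ} (hab : a ≤ b)
    (h : IsACWithDeriv σ g a b) (hm : MapsTo σ (Icc a b) Ω) :
    (1 / 4) * (Real.log (‖A (σ a - ξ)‖ + ‖A (σ a - σ b)‖) - Real.log ‖A (σ a - ξ)‖) ≤
      ∫ t in a..b, kobMetric Ω (σ t) (g t) ∧
    (1 / 4) * (Real.log (‖A (σ b - ξ)‖ + ‖A (σ a - σ b)‖) - Real.log ‖A (σ b - ξ)‖) ≤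
      ∫ t in a..b, kobMetric Ω (σ t) (g t) := by
  have hki := kob_integrable hG.isOpen hab h hm
  have hgi : IntervalIntegrable (fun t => A (g t)) volume a b :=
    ⟨A.integrable_comp h.1.1, A.integrable_comp h.1.2⟩
  have hφ : IntervalIntegrable (fun t => ‖A (g t)‖) volume a b := hgi.norm
  have h0 : ∀ t, 0 ≤ ‖A (g t)‖ := fun t => norm_nonneg _
  have hsub : ∀ s ∈ Icc a b, ∀ t ∈ Icc a b, s ≤ t →
      ‖A (σ t - σ s)‖ ≤ ∫ r in s..t, ‖A (g r)‖ := by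
    intro s hs t ht hst
    have hsa : IntervalIntegrable g volume a s := h.1.mono_set (by
      rw [uIcc_of_le hab, uIcc_of_le hs.1]; exact Icc_subset_Icc_right hs.2)
    have hta : IntervalIntegrable g volume a t := h.1.mono_set (by
      rw [uIcc_of_le hab, uIcc_of_le ht.1]; exact Icc_subset_Icc_right ht.2)
    have hst' : IntervalIntegrable g volume s t := hsa.symm.trans hta
    have e : σ t - σ s = ∫ r in s..t, g r := by
      rw [h.2 t ht, h.2 s hs, add_sub_add_left_eq_sub,
        intervalIntegral.integral_interval_sub_left hta hsa]
    rw [e, ← A.intervalIntegral_comp_comm hst']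
    exact intervalIntegral.norm_integral_le_integral_norm hst
  have haI : a ∈ Icc a b := left_mem_Icc.mpr hab
  have hbI : b ∈ Icc a b := right_mem_Icc.mpr hab
  have hpos : ∀ t ∈ Icc a b, 0 < ‖A (σ t - ξ)‖ := fun t ht => norm_pos_iff.mpr (hA _ (hm ht))
  have hlow : ∀ t ∈ Icc a b, ∀ B, ‖A (σ t - ξ)‖ ≤ B →
      (1 / 4) * (‖A (g t)‖ / B) ≤ kobMetric Ω (σ t) (g t) := by
    intro t ht B hB
    refine le_trans ?_ (kobMetric_ge hG ξ A hA (hm ht) (g t))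
    have := hpos t ht
    calc (1 / 4) * (‖A (g t)‖ / B) ≤ (1 / 4) * (‖A (g t)‖ / ‖A (σ t - ξ)‖) := by gcongr
      _ = _ := by field_simp
  have hprim : ∀ c ∈ uIcc a b, ContinuousOn (fun t => ∫ s in c..t, ‖A (g s)‖) (uIcc a b) :=
    fun c hc => intervalIntegral.continuousOn_primitive_interval' hφ hc
  have hYa : ∀ t ∈ Icc a b, 0 ≤ ∫ s in a..t, ‖A (g s)‖ := fun t ht =>
    intervalIntegral.integral_nonneg ht.1 fun s _ => h0 s
  have hYb : ∀ t ∈ Icc a b, 0 ≤ ∫ s in t..b, ‖A (g s)‖ := fun t ht =>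
    intervalIntegral.integral_nonneg ht.2 fun s _ => h0 s
  have hab' : ‖A (σ a - σ b)‖ ≤ ∫ s in a..b, ‖A (g s)‖ := by
    rw [← norm_neg, ← map_neg, neg_sub]
    exact hsub a haI b hbI hab
  constructor
  · have hD := hpos a haI
    have hint : IntervalIntegrable (fun t => ‖A (g t)‖ / (‖A (σ a - ξ)‖ +
        ∫ s in a..t, ‖A (g s)‖)) volume a b := by
      simp only [div_eq_mul_inv]
      apply hφ.mul_continuousOn
      apply ContinuousOn.inv₀ (continuousOn_const.add (hprim a left_mem_uIcc))
      intro t ht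
      rw [uIcc_of_le hab] at ht
      exact (add_pos_of_pos_of_nonneg hD (hYa t ht)).ne'
    have h1 := intervalIntegral.integral_mono_on hab (hint.const_mul (1 / 4)) hki (fun t ht => by
      apply hlow t ht
      have e : A (σ t - ξ) = A (σ a - ξ) + A (σ t - σ a) := by rw [← map_add]; congr 1; abel
      rw [e]
      exact (norm_add_le _ _).trans (by gcongr; exact hsub a haI t ht ht.1))
    rw [intervalIntegral.integral_const_mul, log_int_left hab hφ h0 hD] at h1
    refine le_trans ?_ h1
    gcongr
  · have hD := hpos b hbI
    have hcont : ContinuousOn (fun t => ∫ s in t..b, ‖A (g s)‖) (uIcc a b) := by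
      have := (hprim b right_mem_uIcc).neg
      refine this.congr fun t _ => ?_
      exact intervalIntegral.integral_symm _ _
    have hint : IntervalIntegrable (fun t => ‖A (g t)‖ / (‖A (σ b - ξ)‖ +
        ∫ s in t..b, ‖A (g s)‖)) volume a b := by
      simp only [div_eq_mul_inv]
      apply hφ.mul_continuousOn
      apply ContinuousOn.inv₀ (continuousOn_const.add hcont)
      intro t ht
      rw [uIcc_of_le hab] at ht
      exact (add_pos_of_pos_of_nonneg hD (hYb t ht)).ne'
    have h1 := intervalIntegral.integral_mono_on hab (hint.const_mul (1 / 4)) hki (fun t ht => by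
      apply hlow t ht
      have e : A (σ t - ξ) = A (σ b - ξ) - A (σ b - σ t) := by rw [← map_sub]; congr 1; abel
      rw [e]
      exact (norm_sub_le _ _).trans (by gcongr; exact hsub t ht b hbI ht.2))
    rw [intervalIntegral.integral_const_mul, log_int_right hab hφ h0 hD] at h1
    refine le_trans ?_ h1
    gcongr

section
variable {E : Type*} [NormedAddCommGroup E] [NormedSpace ℂ E] [CompleteSpace E]

theorem reach_trans {Ω : Set E} {x y z : E}
    (h1 : ∃ (T : ℝ) (g : ℝ → E), 0 ≤ T ∧ IntervalIntegrable g volume 0 T ∧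
      (∀ t ∈ Icc 0 T, x + ∫ s in (0:ℝ)..t, g s ∈ Ω) ∧ x + ∫ s in (0:ℝ)..T, g s = y)
    (h2 : ∃ (T : ℝ) (g : ℝ → E), 0 ≤ T ∧ IntervalIntegrable g volume 0 T ∧
      (∀ t ∈ Icc 0 T, y + ∫ s in (0:ℝ)..t, g s ∈ Ω) ∧ y + ∫ s in (0:ℝ)..T, g s = z) :
    ∃ (T : ℝ) (g : ℝ → E), 0 ≤ T ∧ IntervalIntegrable g volume 0 T ∧
      (∀ t ∈ Icc 0 T, x + ∫ s in (0:ℝ)..t, g s ∈ Ω) ∧ x + ∫ s in (0:ℝ)..T, g s = z := by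
  obtain ⟨T1, g1, hT1, hi1, hm1, he1⟩ := h1
  obtain ⟨T2, g2, hT2, hi2, hm2, he2⟩ := h2
  classical
  set g : ℝ → E := fun t => if t ≤ T1 then g1 t else g2 (t - T1) with hg
  have c1 : ∀ t ∈ Icc 0 T1, EqOn g1 g (uIoc 0 t) := by
    intro t ht s hs
    rw [uIoc_of_le ht.1] at hs
    simp [hg, hs.2.trans ht.2]
  have c2 : ∀ t ∈ Icc T1 (T1 + T2), EqOn (fun s => g2 (s - T1)) g (uIoc T1 t) := by
    intro t ht s hs
    rw [uIoc_of_le ht.1] at hs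
    simp [hg, hs.1]
  have hl : T1 ∈ Icc 0 T1 := ⟨hT1, le_rfl⟩
  have hr : T1 + T2 ∈ Icc T1 (T1 + T2) := ⟨by linarith, le_rfl⟩
  have i1 : IntervalIntegrable g volume 0 T1 := hi1.congr (c1 T1 hl)
  have i2 : IntervalIntegrable g volume T1 (T1 + T2) := by
    have := hi2.comp_sub_right T1
    rw [zero_add, add_comm T2] at this
    exact this.congr (c2 _ hr)
  have e1 : ∀ t ∈ Icc 0 T1, ∫ s in (0:ℝ)..t, g s = ∫ s in (0:ℝ)..t, g1 s := fun t ht =>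
    (intervalIntegral.integral_congr_ae (ae_of_all _ fun s hs => c1 t ht hs)).symm
  have e2 : ∀ t ∈ Icc T1 (T1 + T2), x + ∫ s in (0:ℝ)..t, g s =
      y + ∫ s in (0:ℝ)..(t - T1), g2 s := by
    intro t ht
    have i3 : IntervalIntegrable g volume T1 t := i2.mono_set (by
      rw [uIcc_of_le ht.1, uIcc_of_le hr.1]; exact Icc_subset_Icc_right ht.2)
    rw [← intervalIntegral.integral_add_adjacent_intervals i1 i3, ← add_assoc, e1 T1 hl, he1,
      ← intervalIntegral.integral_congr_ae (ae_of_all _ fun s hs => c2 t ht hs), intervalIntegral.integral_comp_sub_right,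
      sub_self]
  refine ⟨T1 + T2, g, by linarith, i1.trans i2, ?_, ?_⟩
  · intro t ht
    rcases le_total t T1 with h | h
    · rw [e1 t ⟨ht.1, h⟩]; exact hm1 t ⟨ht.1, h⟩
    · rw [e2 t ⟨h, ht.2⟩]
      exact hm2 _ ⟨by linarith, by linarith [ht.2]⟩
  · rw [e2 _ hr, add_sub_cancel_left, he2]

theorem reach_ball {Ω : Set E} {c : E} {ε : ℝ} (hb : ball c ε ⊆ Ω) {x y : E}
    (hx : x ∈ ball c ε) (hy : y ∈ ball c ε) :
    ∃ (T : ℝ) (g : ℝ → E), 0 ≤ T ∧ IntervalIntegrable g volume 0 T ∧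
      (∀ t ∈ Icc 0 T, x + ∫ s in (0:ℝ)..t, g s ∈ Ω) ∧ x + ∫ s in (0:ℝ)..T, g s = y := by
  refine ⟨1, fun _ => y - x, zero_le_one, intervalIntegrable_const, ?_, by simp⟩
  intro t ht
  rw [intervalIntegral.integral_const, sub_zero]
  exact hb ((convex_ball c ε).add_smul_sub_mem hx hy ht)

theorem reach_all {Ω : Set E} (ho : IsOpen Ω) (hc : IsConnected Ω) {p q : E} (hp : p ∈ Ω)
    (hq : q ∈ Ω) : ∃ (a b : ℝ) (σ g : ℝ → E), a ≤ b ∧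
    IsACWithDeriv σ g a b ∧ MapsTo σ (Icc a b) Ω ∧ σ a = p ∧ σ b = q := by
  have key := hc.isPreconnected.induction₂' (fun x y =>
    ∃ (T : ℝ) (g : ℝ → E), 0 ≤ T ∧ IntervalIntegrable g volume 0 T ∧
      (∀ t ∈ Icc 0 T, x + ∫ s in (0:ℝ)..t, g s ∈ Ω) ∧ x + ∫ s in (0:ℝ)..T, g s = y) (by
    intro x hx
    obtain ⟨ε, hε, hb⟩ := Metric.isOpen_iff.mp ho x hx
    filter_upwards [mem_nhdsWithin_of_mem_nhds (ball_mem_nhds x hε)] with y hy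
    have hx' := mem_ball_self (x := x) hε
    exact ⟨reach_ball hb hx' hy, reach_ball hb hy hx'⟩)
    (fun x y z _ _ _ h1 h2 => reach_trans h1 h2) hp hq
  obtain ⟨T, g, hT, hi, hm, he⟩ := key
  refine ⟨0, T, fun t => p + ∫ s in (0:ℝ)..t, g s, g, hT, ⟨hi, fun t _ => by simp⟩, hm,
    by simp, he⟩

end

theorem bdistDir_attained {n : ℕ} {Ω : Set (EuclideanSpace ℂ (Fin n))} (hb : Bornology.IsBounded Ω)
    {x v : EuclideanSpace ℂ (Fin n)} (hx : x ∈ Ω) (hv : v ≠ 0) :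
    ∃ c : ℂ, x + c • v ∈ frontier Ω ∧ bdistDir Ω x v = ‖c‖ * ‖v‖ := by
  have hcl : IsClosed {w : EuclideanSpace ℂ (Fin n) | ∃ c : ℂ, w = x + c • v} := by
    have : {w : EuclideanSpace ℂ (Fin n) | ∃ c : ℂ, w = x + c • v} =
        (fun w => w - x) ⁻¹' (Submodule.span ℂ {v} : Set (EuclideanSpace ℂ (Fin n))) := by
      ext w
      simp only [mem_ofPred_eq, mem_preimage, SetLike.mem_coe, Submodule.mem_span_singleton]
      constructor
      · rintro ⟨c, rfl⟩; exact ⟨c, by simp⟩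
      · rintro ⟨c, hc⟩; exact ⟨c, by rw [hc]; simp⟩
    rw [this]
    exact (Submodule.closed_of_finiteDimensional _).preimage (by fun_prop)
  have hcont : Continuous fun c : ℂ => x + c • v := by fun_prop
  have hne : (frontier Ω ∩ {w | ∃ c : ℂ, w = x + c • v}).Nonempty := by
    have h1 : (frontier ((fun c : ℂ => x + c • v) ⁻¹' Ω)).Nonempty := by
      rw [nonempty_frontier_iff]
      refine ⟨⟨0, by simpa using hx⟩, fun h => ?_⟩
      obtain ⟨R, hR⟩ := hb.exists_norm_le
      have hvn : 0 < ‖v‖ := norm_pos_iff.mpr hv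
      have h2 := hR _ (h ▸ mem_univ (((R + ‖x‖ + 1) / ‖v‖ : ℝ) : ℂ) :
        (((R + ‖x‖ + 1) / ‖v‖ : ℝ) : ℂ) ∈ (fun c : ℂ => x + c • v) ⁻¹' Ω)
      have hR0 : 0 ≤ R := (norm_nonneg x).trans (hR x hx)
      have h3 : ‖(((R + ‖x‖ + 1) / ‖v‖ : ℝ) : ℂ) • v‖ = R + ‖x‖ + 1 := by
        rw [norm_smul, Complex.norm_real, Real.norm_of_nonneg (by positivity)]
        field_simp
      have h4 := norm_sub_le (x + (((R + ‖x‖ + 1) / ‖v‖ : ℝ) : ℂ) • v) x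
      rw [add_sub_cancel_left, h3] at h4
      have h5 : ‖x + (((R + ‖x‖ + 1) / ‖v‖ : ℝ) : ℂ) • v‖ ≤ R := h2
      linarith
    obtain ⟨c, hc⟩ := h1
    exact ⟨x + c • v, hcont.frontier_preimage_subset _ hc, c, rfl⟩
  obtain ⟨w, ⟨hw, c, rfl⟩, hd⟩ := (isClosed_frontier.inter hcl).exists_infDist_eq_dist hne x
  refine ⟨c, hw, ?_⟩
  rw [bdistDir, hd, dist_eq_norm, sub_add_cancel_left, norm_neg, norm_smul]


theorem main_bound {n : ℕ} {Ω : Set (EuclideanSpace ℂ (Fin n))}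
    (hΩo : IsOpen Ω) (hΩc : IsConnected Ω) (hΩb : Bornology.IsBounded Ω) (hcc : CConvex Ω)
    {p q : EuclideanSpace ℂ (Fin n)} (hp : p ∈ Ω) (hq : q ∈ Ω) (hpq : p ≠ q)
    {x : EuclideanSpace ℂ (Fin n)} (hx : x = p ∨ x = q) :
    0 < bdistDir Ω x (p - q) ∧
    (1 / 4) * Real.log (1 + ‖p - q‖ / bdistDir Ω x (p - q)) ≤ kobDist Ω p q := by
  have hG := goodC_of_cconvex hΩo hcc
  have hv : p - q ≠ 0 := sub_ne_zero.mpr hpq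
  have hvn : 0 < ‖p - q‖ := norm_pos_iff.mpr hv
  have hxΩ : x ∈ Ω := by rcases hx with rfl | rfl <;> assumption
  obtain ⟨c, hfr, hbd⟩ := bdistDir_attained hΩb hxΩ hv
  have hξ : x + c • (p - q) ∉ Ω := by
    rw [hΩo.frontier_eq] at hfr
    exact hfr.2
  obtain ⟨A, hA⟩ := supporting hG ⟨p, hp⟩ _ hξ
  have hc : c ≠ 0 := by rintro rfl; exact hξ (by simpa using hxΩ)
  have hcn : 0 < ‖c‖ := norm_pos_iff.mpr hc
  have hD : ‖A (x - (x + c • (p - q)))‖ = ‖c‖ * ‖A (p - q)‖ := by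
    rw [sub_add_cancel_left, map_neg, norm_neg, map_smul, norm_smul]
  have hDpos : 0 < ‖c‖ * ‖A (p - q)‖ := hD ▸ norm_pos_iff.mpr (hA x hxΩ)
  have hAp : 0 < ‖A (p - q)‖ := pos_of_mul_pos_right hDpos hcn.le
  refine ⟨by rw [hbd]; positivity, ?_⟩
  have e : Real.log (1 + ‖p - q‖ / bdistDir Ω x (p - q)) =
      Real.log (‖A (x - (x + c • (p - q)))‖ + ‖A (p - q)‖) -
        Real.log ‖A (x - (x + c • (p - q)))‖ := by
    rw [hD, hbd, ← Real.log_div (by positivity) hDpos.ne']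
    congr 1
    field_simp
  rw [e]
  apply le_csInf
  · obtain ⟨a, b, σ, g, h1, h2, h3, h4, h5⟩ := reach_all hΩo hΩc hp hq
    exact ⟨_, a, b, σ, g, h1, h2, h3, h4, h5, rfl⟩
  · rintro r ⟨a, b, σ, g, hab, hac, hm, ha, hb, rfl⟩
    have := length_ge hG _ A hA hab hac hm
    rw [ha, hb] at this
    rcases hx with rfl | rfl
    · exact this.1
    · exact this.2

theorem statement_16 {n : ℕ}
    (Ω : Set (EuclideanSpace ℂ (Fin n)))
    (hΩo : IsOpen Ω) (hΩc : IsConnected Ω) (hΩb : Bornology.IsBounded Ω)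
    (hcc : CConvex Ω)
    (p q : EuclideanSpace ℂ (Fin n)) (hp : p ∈ Ω) (hq : q ∈ Ω) (hpq : p ≠ q) :
    (1 / 4) * |Real.log (1 + ‖p - q‖ /
        min (bdistDir Ω p (p - q)) (bdistDir Ω q (p - q)))| ≤ kobDist Ω p q := by
  obtain ⟨hp0, hpb⟩ := main_bound hΩo hΩc hΩb hcc hp hq hpq (Or.inl rfl)
  obtain ⟨hq0, hqb⟩ := main_bound hΩo hΩc hΩb hcc hp hq hpq (Or.inr rfl)
  rcases min_choice (bdistDir Ω p (p - q)) (bdistDir Ω q (p - q)) with h | h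
  · rw [h, abs_of_nonneg (Real.log_nonneg (by
      have : 0 ≤ ‖p - q‖ / bdistDir Ω p (p - q) := by positivity
      linarith))]
    exact hpb
  · rw [h, abs_of_nonneg (Real.log_nonneg (by
      have : 0 ≤ ‖p - q‖ / bdistDir Ω q (p - q) := by positivity
      linarith))]
    exact hqb
end
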